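/- arXiv:2212.08193 — 14 statements merged into one kernel-verified Lean document; each statement's English description precedes it below -/
import Mathlib

section
/- Let G be a simple graph and S ⊆ V(G) a set of detectors. Then S is an operational ERR:LD set (i.e., no output with at most one faulty detector is consistent with two distinct intruder configurations) if and only if the following four conditions hold: (i) for every v ∈ V(G), |N[v] ∩ S| ≥ 3; (ii) for all distinct u, v ∈ S, |((N(v) ∩ S) △ (N(u) ∩ S)) − {v, u}| ≥ 1; (iii) for every v ∈ V(G) − S and every u ∈ S, |((N(v) ∩ S) △ (N(u) ∩ S)) − {u}| ≥ 2; (iv) for all distinct u, v ∈ V(G) − S, |(N(v) ∩ S) △ (N(u) ∩ S)| ≥ 3. -/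
open scoped symmDiff

variable {V : Type*}

/-- The closed neighborhood `N[v]` of a vertex. -/
def closedNbhd (G : SimpleGraph V) (v : V) : Set V := insert v (G.neighborSet v)

/-- `S` is an error-correcting locating-dominating (ERR:LD) set: conditions (i)-(iv). -/
def IsErrLD (G : SimpleGraph V) (S : Set V) : Prop :=
  (∀ v : V, 3 ≤ (closedNbhd G v ∩ S).encard) ∧
  (∀ v ∈ S, ∀ u ∈ S, u ≠ v →
    1 ≤ ((((G.neighborSet v ∩ S) ∆ (G.neighborSet u ∩ S)) \ {v, u}).encard)) ∧
  (∀ v ∉ S, ∀ u ∈ S,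
    2 ≤ ((((G.neighborSet v ∩ S) ∆ (G.neighborSet u ∩ S)) \ {u}).encard)) ∧
  (∀ v ∉ S, ∀ u ∉ S, u ≠ v →
    3 ≤ (((G.neighborSet v ∩ S) ∆ (G.neighborSet u ∩ S)).encard))

open Classical in
/-- True signal of a detector `w` under intruder configuration `c`:
`2` if the intruder is at `w`, `1` if the intruder is in `N(w)`, `0` otherwise. -/
noncomputable def trueSignal (G : SimpleGraph V) (c : Option V) (w : V) : Fin 3 :=
  match c with
  | none => 0
  | some x => if x = w then 2 else if G.Adj w x then 1 else 0

/-- An output `f` is consistent with configuration `c` if it agrees with the true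
signals at all but at most one detector of `S`. -/
def Consistent (G : SimpleGraph V) (S : Set V) (f : V → Fin 3) (c : Option V) : Prop :=
  {w | w ∈ S ∧ f w ≠ trueSignal G c w}.Subsingleton

/-- `S` is an operational ERR:LD set: no output is consistent with two distinct
intruder configurations. -/
def IsOperationalErrLD (G : SimpleGraph V) (S : Set V) : Prop :=
  ∀ (f : V → Fin 3) (c₁ c₂ : Option V),
    Consistent G S f c₁ → Consistent G S f c₂ → c₁ = c₂

/-- Detectors at which the two configurations have different true signals. -/
def diffSet (G : SimpleGraph V) (S : Set V) (c₁ c₂ : Option V) : Set V :=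
  {w | w ∈ S ∧ trueSignal G c₁ w ≠ trueSignal G c₂ w}

theorem operational_iff_diffSet (G : SimpleGraph V) (S : Set V) :
    IsOperationalErrLD G S ↔ ∀ c₁ c₂, c₁ ≠ c₂ → 3 ≤ (diffSet G S c₁ c₂).encard := by
  classical
  constructor
  · intro h c₁ c₂ hne
    by_contra hlt
    have hle : (diffSet G S c₁ c₂).encard ≤ 2 := by
      rw [not_le] at hlt
      exact Order.le_of_lt_add_one (by simpa [two_add_one_eq_three] using hlt)
    have key : ∀ a b, diffSet G S c₁ c₂ ⊆ {a, b} → False := by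
      intro a b hab
      apply hne
      refine h (fun w => if w = a then trueSignal G c₁ w else trueSignal G c₂ w) c₁ c₂ ?_ ?_
      · have hb : ∀ x, x ∈ {w | w ∈ S ∧ (if w = a then trueSignal G c₁ w
            else trueSignal G c₂ w) ≠ trueSignal G c₁ w} → x = b := by
          rintro x ⟨hxS, hx⟩
          by_cases hxa : x = a
          · simp [hxa] at hx
          · simp only [hxa, if_false] at hx
            have := hab (show x ∈ diffSet G S c₁ c₂ from ⟨hxS, hx.symm⟩)
            simpa [hxa] using this
        intro x hx y hy
        rw [hb x hx, hb y hy]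
      · have hb : ∀ x, x ∈ {w | w ∈ S ∧ (if w = a then trueSignal G c₁ w
            else trueSignal G c₂ w) ≠ trueSignal G c₂ w} → x = a := by
          rintro x ⟨hxS, hx⟩
          by_contra hxa
          simp [hxa] at hx
        intro x hx y hy
        rw [hb x hx, hb y hy]
    have hV : Nonempty V := by
      by_contra hV
      rw [not_nonempty_iff] at hV
      exact hne (Subsingleton.elim _ _)
    obtain ⟨z⟩ := hV
    rcases hle.lt_or_eq with h2 | h2
    · have h1 : (diffSet G S c₁ c₂).encard ≤ 1 :=
        Order.le_of_lt_add_one (by simpa [one_add_one_eq_two] using h2)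
      rcases Set.encard_le_one_iff_eq.mp h1 with h0 | ⟨a, ha⟩
      · exact key z z (by simp [h0])
      · exact key a a (by simp [ha])
    · obtain ⟨a, b, -, hab⟩ := Set.encard_eq_two.mp h2
      exact key a b hab.subset
  · intro h f c₁ c₂ h1 h2
    by_contra hne
    have h3 := h c₁ c₂ hne
    have hsub : diffSet G S c₁ c₂ ⊆ {w | w ∈ S ∧ f w ≠ trueSignal G c₁ w} ∪
        {w | w ∈ S ∧ f w ≠ trueSignal G c₂ w} := by
      rintro x ⟨hxS, hx⟩
      by_cases hf : f x = trueSignal G c₁ x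
      · exact Or.inr ⟨hxS, by rwa [hf]⟩
      · exact Or.inl ⟨hxS, hf⟩
    have := (Set.encard_le_encard hsub).trans (Set.encard_union_le _ _)
    have h4 := this.trans (add_le_add (Set.encard_le_one_iff_subsingleton.mpr h1)
      (Set.encard_le_one_iff_subsingleton.mpr h2))
    have h5 := h3.trans h4
    norm_num at h5

theorem diffSet_comm (G : SimpleGraph V) (S : Set V) (c₁ c₂ : Option V) :
    diffSet G S c₁ c₂ = diffSet G S c₂ c₁ := by
  ext w; simp [diffSet, ne_comm]

theorem diffSet_none (G : SimpleGraph V) (S : Set V) (v : V) :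
    diffSet G S none (some v) = closedNbhd G v ∩ S := by
  ext w
  simp only [diffSet, closedNbhd, trueSignal, Set.mem_setOf_eq, Set.mem_inter_iff,
    Set.mem_insert_iff, SimpleGraph.mem_neighborSet, G.adj_comm v w]
  by_cases h1 : v = w
  · subst h1; simp
  · by_cases h2 : G.Adj w v <;> simp [h1, h2, Ne.symm h1]

theorem diffSet_some (G : SimpleGraph V) (S : Set V) (v u : V) (h : u ≠ v) :
    diffSet G S (some v) (some u) =
      ((((G.neighborSet v ∩ S) ∆ (G.neighborSet u ∩ S)) \ {v, u}) ∪ ({v, u} ∩ S)) := by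
  ext w
  simp only [diffSet, trueSignal, Set.mem_setOf_eq, Set.mem_inter_iff, Set.mem_union,
    Set.mem_diff, Set.mem_symmDiff, Set.mem_singleton_iff,
    Set.mem_insert_iff, SimpleGraph.mem_neighborSet, G.adj_comm v w, G.adj_comm u w]
  by_cases h1 : v = w
  · subst h1
    by_cases h2 : G.Adj v u <;> simp [h, h2]
  · by_cases h3 : u = w
    · subst h3
      by_cases h2 : G.Adj u v <;> simp [h1, h2]
    · by_cases h2 : G.Adj w v <;> by_cases h4 : G.Adj w u <;>
        simp [h1, h2, h3, h4, Ne.symm h1, Ne.symm h3]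

theorem card_both (G : SimpleGraph V) (S : Set V) (v u : V) (h : u ≠ v)
    (hv : v ∈ S) (hu : u ∈ S) :
    3 ≤ (diffSet G S (some v) (some u)).encard ↔
      1 ≤ ((((G.neighborSet v ∩ S) ∆ (G.neighborSet u ∩ S)) \ {v, u}).encard) := by
  have hi : ({v, u} : Set V) ∩ S = {v, u} := by
    rw [Set.inter_eq_left]; rintro x (rfl | rfl) <;> assumption
  rw [diffSet_some G S v u h, hi, Set.encard_union_eq Set.disjoint_sdiff_left,
    Set.encard_pair h.symm, show (3 : ℕ∞) = 1 + 2 by norm_num]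
  exact ENat.add_le_add_iff_right (by simp)

theorem card_one (G : SimpleGraph V) (S : Set V) (v u : V) (hv : v ∉ S) (hu : u ∈ S) :
    3 ≤ (diffSet G S (some v) (some u)).encard ↔
      2 ≤ ((((G.neighborSet v ∩ S) ∆ (G.neighborSet u ∩ S)) \ {u}).encard) := by
  have h : u ≠ v := by rintro rfl; exact hv hu
  have hi : ({v, u} : Set V) ∩ S = {u} := by
    ext x; simp only [Set.mem_inter_iff, Set.mem_insert_iff, Set.mem_singleton_iff]
    grind
  have hs : ((G.neighborSet v ∩ S) ∆ (G.neighborSet u ∩ S)) \ {v, u} =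
      ((G.neighborSet v ∩ S) ∆ (G.neighborSet u ∩ S)) \ {u} := by
    ext x; simp only [Set.mem_inter_iff, Set.mem_insert_iff, Set.mem_singleton_iff,
      Set.mem_diff, Set.mem_symmDiff]
    grind
  rw [diffSet_some G S v u h, hi, hs, Set.encard_union_eq Set.disjoint_sdiff_left,
    Set.encard_singleton, show (3 : ℕ∞) = 2 + 1 by norm_num]
  exact ENat.add_le_add_iff_right (by simp)

theorem card_zero (G : SimpleGraph V) (S : Set V) (v u : V) (h : u ≠ v)
    (hv : v ∉ S) (hu : u ∉ S) :
    3 ≤ (diffSet G S (some v) (some u)).encard ↔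
      3 ≤ (((G.neighborSet v ∩ S) ∆ (G.neighborSet u ∩ S)).encard) := by
  have hs : diffSet G S (some v) (some u) =
      ((G.neighborSet v ∩ S) ∆ (G.neighborSet u ∩ S)) := by
    rw [diffSet_some G S v u h]
    ext x; simp only [Set.mem_inter_iff, Set.mem_insert_iff, Set.mem_singleton_iff,
      Set.mem_diff, Set.mem_symmDiff, Set.mem_union]
    grind
  rw [hs]

theorem operational_iff_errLD (G : SimpleGraph V) (S : Set V) :
    IsOperationalErrLD G S ↔ IsErrLD G S := by
  rw [operational_iff_diffSet]
  constructor
  · intro h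
    refine ⟨fun v => ?_, fun v hv u hu hne => ?_, fun v hv u hu => ?_, fun v hv u hu hne => ?_⟩
    · rw [← diffSet_none]; exact h _ _ (by simp)
    · exact (card_both G S v u hne hv hu).mp (h _ _ (by simpa using hne.symm))
    · exact (card_one G S v u hv hu).mp (h _ _ (by
        intro he; simp only [Option.some.injEq] at he; exact hv (he ▸ hu)))
    · exact (card_zero G S v u hne hv hu).mp (h _ _ (by simpa using hne.symm))
  · rintro ⟨h1, h2, h3, h4⟩ c₁ c₂ hne
    rcases c₁ with _ | v <;> rcases c₂ with _ | u
    · exact absurd rfl hne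
    · rw [diffSet_none]; exact h1 u
    · rw [diffSet_comm, diffSet_none]; exact h1 v
    · have hne' : u ≠ v := by rintro rfl; exact hne rfl
      by_cases hv : v ∈ S <;> by_cases hu : u ∈ S
      · exact (card_both G S v u hne' hv hu).mpr (h2 v hv u hu hne')
      · rw [diffSet_comm]; exact (card_one G S u v hu hv).mpr (h3 u hu v hv)
      · exact (card_one G S v u hv hu).mpr (h3 v hv u hu)
      · exact (card_zero G S v u hne' hv hu).mpr (h4 v hv u hu hne')
end

section
/- Let G be a simple graph, S ⊆ V(G) an operational ERR:LD set, and v ∈ S. Then (i) |N(v) ∩ S| ≥ 2, and (ii) for every u ∈ S with u ≠ v, |((N(v) ∩ S) △ (N(u) ∩ S)) − {v, u}| ≥ 1. -/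
open scoped symmDiff

variable {V : Type*}

theorem errLD_detector_properties (G : SimpleGraph V) (S : Set V)
    (hS : IsOperationalErrLD G S) (v : V) (hv : v ∈ S) :
    2 ≤ (G.neighborSet v ∩ S).encard ∧
    (∀ u ∈ S, u ≠ v →
      1 ≤ ((((G.neighborSet v ∩ S) ∆ (G.neighborSet u ∩ S)) \ {v, u}).encard)) := by
  classical
  constructor
  · by_contra hlt
    have hle : (G.neighborSet v ∩ S).encard ≤ 1 := by
      have h1 : (G.neighborSet v ∩ S).encard < 1 + 1 := by
        rw [one_add_one_eq_two]
        exact not_le.mp hlt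
      exact Order.le_of_lt_add_one h1
    have hsub := Set.encard_le_one_iff.mp hle
    have h := hS (fun w => if w = v then 0 else trueSignal G (some v) w) none (some v) ?_ ?_
    · simp at h
    · rintro a ⟨haS, ha⟩ b ⟨hbS, hb⟩
      have key : ∀ w, (if w = v then (0 : Fin 3) else trueSignal G (some v) w) ≠
          trueSignal G none w → G.Adj v w := by
        intro w hw
        by_contra hn
        have hn' : ¬ G.Adj w v := fun h => hn h.symm
        apply hw
        by_cases hwv : w = v
        · simp [hwv, trueSignal]
        · simp [hwv, trueSignal, hn', Ne.symm hwv]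
      exact hsub a b ⟨key a ha, haS⟩ ⟨key b hb, hbS⟩
    · have key : ∀ w, (if w = v then (0 : Fin 3) else trueSignal G (some v) w) ≠
          trueSignal G (some v) w → w = v := by
        intro w hw
        by_contra hn
        exact hw (if_neg hn)
      rintro a ⟨-, ha⟩ b ⟨-, hb⟩
      rw [key a ha, key b hb]
  · intro u hu huv
    rw [Set.one_le_encard_iff_nonempty]
    by_contra hne
    rw [Set.not_nonempty_iff_eq_empty] at hne
    have hiff : ∀ w ∈ S, w ≠ v → w ≠ u → (G.Adj w v ↔ G.Adj w u) := by
      intro w hw hwv hwu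
      have h := Set.eq_empty_iff_forall_notMem.mp hne w
      simp only [Set.mem_diff, Set.mem_symmDiff, Set.mem_inter_iff,
        SimpleGraph.mem_neighborSet, Set.mem_insert_iff, Set.mem_singleton_iff] at h
      rw [G.adj_comm w v, G.adj_comm w u]
      tauto
    have h := hS (fun w => if w = u then trueSignal G (some u) w else trueSignal G (some v) w)
      (some v) (some u) ?_ ?_
    · exact huv (Option.some.inj h).symm
    · have key : ∀ w, (if w = u then trueSignal G (some u) w else trueSignal G (some v) w) ≠
          trueSignal G (some v) w → w = u := by
        intro w hw
        by_contra hn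
        exact hw (if_neg hn)
      rintro a ⟨-, ha⟩ b ⟨-, hb⟩
      rw [key a ha, key b hb]
    · have key : ∀ w ∈ S,
          (if w = u then trueSignal G (some u) w else trueSignal G (some v) w) ≠
          trueSignal G (some u) w → w = v := by
        intro w hwS hw
        by_contra hn
        apply hw
        by_cases hwu : w = u
        · exact if_pos hwu
        · rw [if_neg hwu]
          simp [trueSignal, Ne.symm hn, Ne.symm hwu, hiff w hwS hn hwu]
      rintro a ⟨haS, ha⟩ b ⟨hbS, hb⟩
      rw [key a haS ha, key b hbS hb]
end

section
/- Let G be a simple graph, S ⊆ V(G) an operational ERR:LD set, and v ∈ V(G) − S. Then (i) |N(v) ∩ S| ≥ 3, (ii) for every u ∈ S, |((N(v) ∩ S) △ (N(u) ∩ S)) − {u}| ≥ 2, and (iii) for every u ∈ V(G) − S with u ≠ v, |(N(v) ∩ S) △ (N(u) ∩ S)| ≥ 3. -/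
open scoped symmDiff

variable {V : Type*}

theorem three_le_diff (G : SimpleGraph V) (S : Set V)
    (hS : IsOperationalErrLD G S) (c₁ c₂ : Option V) (hc : c₁ ≠ c₂) :
    3 ≤ {w | w ∈ S ∧ trueSignal G c₁ w ≠ trueSignal G c₂ w}.encard := by
  classical
  by_contra hlt
  set D := {w | w ∈ S ∧ trueSignal G c₁ w ≠ trueSignal G c₂ w} with hD
  rw [not_le] at hlt
  rcases D.eq_empty_or_nonempty with h0 | ⟨a, ha⟩
  · apply hc
    apply hS (trueSignal G c₁) c₁ c₂
    · intro x hx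
      exact absurd rfl hx.2
    · intro x hx
      have : x ∈ D := hx
      simp [h0] at this
  · have h1 : (D \ {a}).encard ≤ 1 := by
      have h2 := Set.encard_sdiff_singleton_add_one ha
      rw [← h2] at hlt
      have h3 : (D \ {a}).encard + 1 < 2 + 1 := by
        rwa [show (2 : ℕ∞) + 1 = 3 by norm_num]
      have h4 : (D \ {a}).encard < 1 + 1 := by
        have := lt_of_add_lt_add_right h3
        rwa [one_add_one_eq_two]
      exact Order.le_of_lt_add_one h4
    rw [Set.encard_le_one_iff] at h1
    apply hc
    apply hS (Function.update (trueSignal G c₁) a (trueSignal G c₂ a)) c₁ c₂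
    · have key : ∀ x, x ∈ {w | w ∈ S ∧ Function.update (trueSignal G c₁) a
          (trueSignal G c₂ a) w ≠ trueSignal G c₁ w} → x = a := by
        intro x hx
        by_contra hxa
        exact hx.2 (by simp [Function.update_of_ne hxa])
      intro x hx y hy
      rw [key x hx, key y hy]
    · have key : ∀ x, x ∈ {w | w ∈ S ∧ Function.update (trueSignal G c₁) a
          (trueSignal G c₂ a) w ≠ trueSignal G c₂ w} → x ∈ D \ {a} := by
        intro x hx
        have hxa : x ≠ a := by
          rintro rfl
          exact hx.2 (by simp)
        refine ⟨⟨hx.1, ?_⟩, hxa⟩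
        have := hx.2
        rwa [Function.update_of_ne hxa] at this
      intro x hx y hy
      exact h1 x y (key x hx) (key y hy)

theorem errLD_nondetector_properties (G : SimpleGraph V) (S : Set V)
    (hS : IsOperationalErrLD G S) (v : V) (hv : v ∉ S) :
    3 ≤ (G.neighborSet v ∩ S).encard ∧
    (∀ u ∈ S,
      2 ≤ ((((G.neighborSet v ∩ S) ∆ (G.neighborSet u ∩ S)) \ {u}).encard)) ∧
    (∀ u ∉ S, u ≠ v →
      3 ≤ (((G.neighborSet v ∩ S) ∆ (G.neighborSet u ∩ S)).encard)) := by
  refine ⟨?_, ?_, ?_⟩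
  · refine (three_le_diff G S hS (some v) none (by simp)).trans (Set.encard_le_encard ?_)
    rintro w ⟨hw, h⟩
    have hvw : v ≠ w := by rintro rfl; exact hv hw
    refine ⟨?_, hw⟩
    by_contra hn
    have hn' : ¬ G.Adj w v := fun h => hn h.symm
    simp [trueSignal, hvw, hn'] at h
  · intro u hu
    have h3 := (three_le_diff G S hS (some v) (some u)
      (by rintro ⟨⟩; exact hv hu)).trans (Set.encard_le_encard
      (t := insert u (((G.neighborSet v ∩ S) ∆ (G.neighborSet u ∩ S)) \ {u})) ?_)
    · rw [Set.encard_insert_of_notMem (by simp)] at h3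
      rw [show (3 : ℕ∞) = 2 + 1 by norm_num] at h3
      exact (ENat.add_le_add_iff_right (by simp)).1 h3
    · rintro w ⟨hw, h⟩
      have hvw : v ≠ w := by rintro rfl; exact hv hw
      by_cases huw : u = w
      · exact Or.inl huw.symm
      · refine Or.inr ⟨?_, fun h => huw h.symm⟩
        simp only [trueSignal, hvw, huw, if_false] at h
        simp only [Set.mem_symmDiff, Set.mem_inter_iff, SimpleGraph.mem_neighborSet, hw, and_true]
        rw [G.adj_comm v, G.adj_comm u]
        by_cases h1 : G.Adj w v <;> by_cases h2 : G.Adj w u <;> simp_all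
  · intro u hu huv
    refine (three_le_diff G S hS (some v) (some u)
      (by rintro ⟨⟩; exact huv rfl)).trans (Set.encard_le_encard ?_)
    rintro w ⟨hw, h⟩
    have hvw : v ≠ w := by rintro rfl; exact hv hw
    have huw : u ≠ w := by rintro rfl; exact hu hw
    simp only [trueSignal, hvw, huw, if_false] at h
    simp only [Set.mem_symmDiff, Set.mem_inter_iff, SimpleGraph.mem_neighborSet, hw, and_true]
    rw [G.adj_comm v, G.adj_comm u]
    by_cases h1 : G.Adj w v <;> by_cases h2 : G.Adj w u <;> simp_all
end

section
/- Let G be a simple graph and S ⊆ V(G). Then S is an ERR:LD set of G (i.e., S satisfies conditions (i)–(iv)) if and only if (a) for every v ∈ V(G), |N[v] ∩ S| ≥ 3, and (b) for all distinct u, v ∈ V(G), |((N(v) ∩ S) △ (N(u) ∩ S)) − {v, u}| ≥ 3 − |{v, u} ∩ S|. -/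
open scoped symmDiff

variable {V : Type*}

theorem errLD_diff_pair (A B S : Set V) (v u : V) (hv : v ∉ S) :
    ((A ∩ S) ∆ (B ∩ S)) \ {v, u} = ((A ∩ S) ∆ (B ∩ S)) \ {u} := by
  ext x
  simp only [Set.mem_sdiff, Set.mem_symmDiff, Set.mem_inter_iff, Set.mem_insert_iff,
    Set.mem_singleton_iff]
  constructor
  · tauto
  · rintro ⟨h, hxu⟩
    refine ⟨h, ?_⟩
    rintro (rfl | h')
    · tauto
    · exact hxu h'

theorem errLD_diff_single (A B S : Set V) (u : V) (hu : u ∉ S) :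
    ((A ∩ S) ∆ (B ∩ S)) \ {u} = (A ∩ S) ∆ (B ∩ S) := by
  apply Set.sdiff_singleton_eq_self
  simp only [Set.mem_symmDiff, Set.mem_inter_iff]
  tauto

theorem errLD_inter_two (S : Set V) (v u : V) (hv : v ∈ S) (hu : u ∈ S) (h : u ≠ v) :
    3 - (({v, u} : Set V) ∩ S).encard = 1 := by
  have : ({v, u} : Set V) ∩ S = {v, u} := by
    ext x; simp only [Set.mem_inter_iff, Set.mem_insert_iff, Set.mem_singleton_iff]; grind
  rw [this, Set.encard_pair h.symm]; rfl

theorem errLD_inter_one (S : Set V) (v u : V) (hv : v ∉ S) (hu : u ∈ S) :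
    3 - (({v, u} : Set V) ∩ S).encard = 2 := by
  have : ({v, u} : Set V) ∩ S = {u} := by
    ext x; simp only [Set.mem_inter_iff, Set.mem_insert_iff, Set.mem_singleton_iff]; grind
  rw [this, Set.encard_singleton]; rfl

theorem errLD_inter_zero (S : Set V) (v u : V) (hv : v ∉ S) (hu : u ∉ S) :
    3 - (({v, u} : Set V) ∩ S).encard = 3 := by
  have : ({v, u} : Set V) ∩ S = ∅ := by
    ext x; simp only [Set.mem_inter_iff, Set.mem_insert_iff, Set.mem_singleton_iff,
      Set.mem_empty_iff_false]; grind
  rw [this, Set.encard_empty]; rfl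

theorem errLD_iff_uniform (G : SimpleGraph V) (S : Set V) :
    IsErrLD G S ↔
      ((∀ v : V, 3 ≤ (closedNbhd G v ∩ S).encard) ∧
       (∀ u v : V, u ≠ v →
         3 - (({v, u} : Set V) ∩ S).encard ≤
           (((G.neighborSet v ∩ S) ∆ (G.neighborSet u ∩ S)) \ {v, u}).encard)) := by
  unfold IsErrLD
  refine and_congr_right fun _ => ?_
  constructor
  · rintro ⟨h2, h3, h4⟩ u v huv
    by_cases hv : v ∈ S <;> by_cases hu : u ∈ S
    · rw [errLD_inter_two S v u hv hu huv]
      exact h2 v hv u hu huv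
    · rw [Set.pair_comm, errLD_inter_one S u v hu hv, errLD_diff_pair _ _ _ _ _ hu, symmDiff_comm]
      exact h3 u hu v hv
    · rw [errLD_inter_one S v u hv hu, errLD_diff_pair _ _ _ _ _ hv]
      exact h3 v hv u hu
    · rw [errLD_inter_zero S v u hv hu, errLD_diff_pair _ _ _ _ _ hv,
        errLD_diff_single _ _ _ _ hu]
      exact h4 v hv u hu huv
  · intro h
    refine ⟨fun v hv u hu huv => ?_, fun v hv u hu => ?_, fun v hv u hu huv => ?_⟩
    · have := h u v huv
      rwa [errLD_inter_two S v u hv hu huv] at this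
    · have := h u v (fun e => hv (e ▸ hu))
      rwa [errLD_inter_one S v u hv hu, errLD_diff_pair _ _ _ _ _ hv] at this
    · have := h u v huv
      rwa [errLD_inter_zero S v u hv hu, errLD_diff_pair _ _ _ _ _ hv,
        errLD_diff_single _ _ _ _ hu] at this
end

section
/- Let G be a simple graph. Every DET:LD set of G is also a RED:LD set of G. -/
open scoped symmDiff

variable {V : Type*}

/-- `S` is a redundant locating-dominating (RED:LD) set. -/
def IsRedLD (G : SimpleGraph V) (S : Set V) : Prop :=
  (∀ v : V, 2 ≤ (closedNbhd G v ∩ S).encard) ∧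
  (∀ v ∈ S, ∀ u ∉ S,
    1 ≤ ((((G.neighborSet v ∩ S) ∆ (G.neighborSet u ∩ S)) \ {v}).encard)) ∧
  (∀ v ∉ S, ∀ u ∉ S, u ≠ v →
    2 ≤ (((G.neighborSet v ∩ S) ∆ (G.neighborSet u ∩ S)).encard))

/-- `S` is an error-detecting locating-dominating (DET:LD) set. -/
def IsDetLD (G : SimpleGraph V) (S : Set V) : Prop :=
  (∀ v : V, 2 ≤ (closedNbhd G v ∩ S).encard) ∧
  (∀ v ∈ S, ∀ u ∈ S, u ≠ v →
    1 ≤ (((G.neighborSet v ∩ S) ∆ (G.neighborSet u ∩ S)).encard)) ∧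
  (∀ v ∉ S, ∀ u ∈ S,
    2 ≤ ((G.neighborSet v ∩ S) \ (G.neighborSet u ∩ S)).encard ∨
    1 ≤ ((G.neighborSet u ∩ S) \ (G.neighborSet v ∩ S)).encard) ∧
  (∀ v ∉ S, ∀ u ∉ S, u ≠ v →
    2 ≤ ((G.neighborSet v ∩ S) \ (G.neighborSet u ∩ S)).encard ∨
    2 ≤ ((G.neighborSet u ∩ S) \ (G.neighborSet v ∩ S)).encard)

theorem detLD_isRedLD (G : SimpleGraph V) (S : Set V) (h : IsDetLD G S) :
    IsRedLD G S := by
  obtain ⟨h1, -, h3, h4⟩ := h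
  refine ⟨h1, ?_, ?_⟩
  · intro v hv u hu
    rw [Set.one_le_encard_iff_nonempty]
    rcases h3 u hu v hv with h | h
    · have h' : 1 < ((G.neighborSet u ∩ S) \ (G.neighborSet v ∩ S)).encard :=
        lt_of_lt_of_le (by norm_num) h
      obtain ⟨a, b, ha, hb, hab⟩ := Set.one_lt_encard_iff.1 h'
      by_cases hav : a = v
      · exact ⟨b, Or.inr hb, fun hbv => hab (hav.trans (Set.mem_singleton_iff.1 hbv).symm)⟩
      · exact ⟨a, Or.inr ha, hav⟩
    · obtain ⟨a, ha⟩ := Set.one_le_encard_iff_nonempty.1 h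
      refine ⟨a, Or.inl ha, fun hav => ?_⟩
      rw [Set.mem_singleton_iff] at hav
      subst hav
      exact G.loopless.irrefl _ ha.1.1
  · intro v hv u hu huv
    rcases h4 v hv u hu huv with h | h
    · exact h.trans (Set.encard_le_encard fun x hx => Or.inl hx)
    · exact h.trans (Set.encard_le_encard fun x hx => Or.inr hx)
end

section
/- If G is a finite cubic (3-regular) twin-free simple graph on n vertices and S is an ERR:LD set of G, then 4·|S| ≥ 3·n, i.e., |S| ≥ 3n/4. -/
open scoped symmDiff

variable {V : Type*}

/-- `G` is twin-free: no two distinct vertices `u, v` satisfy `N(u) = N(v)` or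
`N[u] = N[v]`. -/
def TwinFree (G : SimpleGraph V) : Prop :=
  ∀ u v : V, u ≠ v →
    ¬(G.neighborSet u = G.neighborSet v ∨ closedNbhd G u = closedNbhd G v)

theorem errLD_cubic_lower_bound [Fintype V] (G : SimpleGraph V)
    (hcubic : ∀ v : V, (G.neighborSet v).ncard = 3) (htf : TwinFree G)
    (S : Set V) (hS : IsErrLD G S) :
    3 * Fintype.card V ≤ 4 * S.ncard := by
  classical
  obtain ⟨h1, -, -, -⟩ := hS
  have h1' : ∀ v, 3 ≤ (closedNbhd G v ∩ S).ncard := by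
    intro v
    have h := h1 v
    rw [← Set.Finite.cast_ncard_eq (Set.toFinite _)] at h
    exact_mod_cast h
  have key := Finset.card_mul_le_card_mul (s := Sᶜ.toFinset) (t := S.toFinset) (m := 3) (n := 1)
    G.Adj ?_ ?_
  · have e1 : Sᶜ.toFinset.card = Sᶜ.ncard := (Set.ncard_eq_toFinset_card' _).symm
    have e2 : S.toFinset.card = S.ncard := (Set.ncard_eq_toFinset_card' _).symm
    have e3 := Set.ncard_add_ncard_compl S
    rw [Nat.card_eq_fintype_card] at e3
    rw [e1, e2] at key
    omega
  · intro v hv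
    have hv' : v ∉ S := by simpa using hv
    refine (h1' v).trans ?_
    rw [← Set.ncard_coe_finset]
    refine Set.ncard_le_ncard ?_ (Set.toFinite _)
    rintro x ⟨hx, hxS⟩
    rcases hx with rfl | hx
    · exact absurd hxS hv'
    · simpa [Finset.bipartiteAbove] using And.intro hxS hx
  · intro b _
    have h2 : (closedNbhd G b ∩ S).ncard ≤ (G.neighborSet b ∩ S).ncard + 1 := by
      refine le_trans (Set.ncard_le_ncard ?_ (Set.toFinite _)) (Set.ncard_insert_le b _)
      rintro x ⟨hx, hxS⟩
      rcases hx with rfl | hx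
      · exact Or.inl rfl
      · exact Or.inr ⟨hx, hxS⟩
    have h3 := Set.ncard_inter_add_ncard_diff_eq_ncard (G.neighborSet b) S (Set.toFinite _)
    have h4 : (Finset.bipartiteBelow G.Adj Sᶜ.toFinset b).card
        ≤ (G.neighborSet b \ S).ncard := by
      rw [← Set.ncard_coe_finset]
      refine Set.ncard_le_ncard ?_ (Set.toFinite _)
      intro x hx
      have hx' : x ∉ S ∧ G.Adj x b := by simpa [Finset.bipartiteBelow] using hx
      exact ⟨hx'.2.symm, hx'.1⟩
    have h5 := h1' b
    have h6 := hcubic b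
    omega
end

section
/- Every ERR:LD set of the infinite ladder graph P∞ □ P₂ has density at least 5/6; hence the minimum ERR:LD density of the infinite ladder graph is 5/6. -/
open scoped symmDiff

variable {V : Type*}

/-- The ball of radius `r` around `v₀` in graph distance. -/
def ballSet (G : SimpleGraph V) (v₀ : V) (r : ℕ) : Set V := {u | G.dist v₀ u ≤ r}

/-- The (upper) density of a vertex set `S`, relative to base vertex `v₀`. -/
noncomputable def density (G : SimpleGraph V) (S : Set V) (v₀ : V) : ℝ :=
  Filter.limsup (fun r : ℕ =>
    ((S ∩ ballSet G v₀ r).ncard : ℝ) / ((ballSet G v₀ r).ncard : ℝ)) Filter.atTop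

/-- The infinite ladder graph `P∞ □ P₂` on `ℤ × Fin 2`. -/
def ladder : SimpleGraph (ℤ × Fin 2) :=
  SimpleGraph.fromRel (fun p q => (p.2 = q.2 ∧ p.1 = q.1 + 1) ∨ (p.1 = q.1 ∧ p.2 ≠ q.2))

theorem lad_adj (x y : ℤ) (a b : Fin 2) : ladder.Adj (x, a) (y, b) ↔
    (a = b ∧ (x = y + 1 ∨ y = x + 1)) ∨ (x = y ∧ a ≠ b) := by
  simp only [ladder, SimpleGraph.fromRel_adj, ne_eq, Prod.mk.injEq, not_and]
  constructor
  · rintro ⟨_, h | h⟩ <;> grind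
  · grind

theorem lad_le_walk {p q : ℤ × Fin 2} (w : ladder.Walk p q) :
    |q.1| + (q.2 : ℤ) ≤ |p.1| + (p.2 : ℤ) + w.length := by
  induction w with
  | nil => simp
  | @cons u v t h w ih =>
    obtain ⟨x, a⟩ := u
    obtain ⟨y, b⟩ := v
    rw [lad_adj] at h
    simp only [SimpleGraph.Walk.length_cons, Nat.cast_add, Nat.cast_one]
    have : |y| + (b : ℤ) ≤ |x| + (a : ℤ) + 1 := by
      have hab := a.2
      have hbb := b.2
      rcases h with ⟨rfl, h⟩ | ⟨rfl, h⟩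
      · rcases abs_cases x with h1 | h1 <;> rcases abs_cases y with h2 | h2 <;> omega
      · omega
    simp only at ih ⊢
    omega

theorem lad_walk_pos (n : ℕ) :
    ∃ w : ladder.Walk ((0 : ℤ), (0 : Fin 2)) ((n : ℤ), (0 : Fin 2)), w.length = n := by
  induction n with
  | zero => exact ⟨SimpleGraph.Walk.nil, rfl⟩
  | succ n ih =>
    obtain ⟨w, hw⟩ := ih
    have h : ladder.Adj ((n : ℤ), (0 : Fin 2)) (((n + 1 : ℕ) : ℤ), (0 : Fin 2)) := by
      rw [lad_adj]; left; exact ⟨rfl, Or.inr (by push_cast; ring)⟩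
    exact ⟨w.concat h, by simp [hw]⟩

theorem lad_walk_neg (n : ℕ) :
    ∃ w : ladder.Walk ((0 : ℤ), (0 : Fin 2)) (-(n : ℤ), (0 : Fin 2)), w.length = n := by
  induction n with
  | zero => exact ⟨SimpleGraph.Walk.nil, rfl⟩
  | succ n ih =>
    obtain ⟨w, hw⟩ := ih
    have h : ladder.Adj (-(n : ℤ), (0 : Fin 2)) (-((n + 1 : ℕ) : ℤ), (0 : Fin 2)) := by
      rw [lad_adj]; left; exact ⟨rfl, Or.inl (by push_cast; ring)⟩
    exact ⟨w.concat h, by simp [hw]⟩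

theorem lad_walk0 (x : ℤ) :
    ∃ w : ladder.Walk ((0 : ℤ), (0 : Fin 2)) (x, (0 : Fin 2)), (w.length : ℤ) = |x| := by
  rcases Int.eq_nat_or_neg x with ⟨n, rfl | rfl⟩
  · obtain ⟨w, hw⟩ := lad_walk_pos n
    exact ⟨w, by simp [hw]⟩
  · obtain ⟨w, hw⟩ := lad_walk_neg n
    exact ⟨w, by simp [hw]⟩

theorem lad_walk (x : ℤ) (a : Fin 2) :
    ∃ w : ladder.Walk ((0 : ℤ), (0 : Fin 2)) (x, a), (w.length : ℤ) = |x| + (a : ℤ) := by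
  obtain ⟨w, hw⟩ := lad_walk0 x
  fin_cases a
  · exact ⟨w, by simp [hw]⟩
  · have h : ladder.Adj (x, (0 : Fin 2)) (x, (1 : Fin 2)) := by
      rw [lad_adj]; right; simp
    exact ⟨w.concat h, by simp [hw]⟩

theorem lad_dist (x : ℤ) (a : Fin 2) :
    (ladder.dist ((0 : ℤ), (0 : Fin 2)) (x, a) : ℤ) = |x| + (a : ℤ) := by
  obtain ⟨w, hw⟩ := lad_walk x a
  obtain ⟨w', hw'⟩ := w.reachable.exists_walk_length_eq_dist
  have h1 := SimpleGraph.dist_le w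
  have h2 := lad_le_walk w'
  simp at h2
  omega

/-- The ball as a finset. -/
noncomputable def ballF (r : ℕ) : Finset (ℤ × Fin 2) :=
  (Finset.Icc (-(r : ℤ)) r ×ˢ {0}) ∪ (Finset.Icc (-(r : ℤ) + 1) (r - 1) ×ˢ {1})

theorem mem_ballF (r : ℕ) (x : ℤ) (a : Fin 2) : (x, a) ∈ ballF r ↔ |x| + (a : ℤ) ≤ r := by
  simp only [ballF, Finset.mem_union, Finset.mem_product, Finset.mem_Icc, Finset.mem_singleton]
  fin_cases a
  · simp [abs_le]
  · simp
    rcases abs_cases x with h1 | h1 <;> omega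

theorem lad_ball_eq (r : ℕ) : ballSet ladder ((0 : ℤ), (0 : Fin 2)) r = (ballF r : Set (ℤ × Fin 2)) := by
  ext ⟨x, a⟩
  rw [Finset.mem_coe, mem_ballF, ← lad_dist]
  simp [ballSet]

theorem card_ballF (r : ℕ) (hr : 1 ≤ r) : (ballF r).card = 4 * r := by
  rw [ballF, Finset.card_union_of_disjoint]
  · simp
    omega
  · rw [Finset.disjoint_left]
    rintro ⟨x, a⟩ h1 h2
    simp at h1 h2
    omega

theorem lad_dom {S : Set (ℤ × Fin 2)} (h : IsErrLD ladder S) {v p q : ℤ × Fin 2}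
    (hp : p ∈ closedNbhd ladder v) (hq : q ∈ closedNbhd ladder v) (hpS : p ∉ S) (hqS : q ∉ S) :
    p = q := by
  by_contra hne
  have h1 := h.1 v
  obtain ⟨x, a⟩ := v
  have hN : ∀ w, w ∈ closedNbhd ladder (x, a) ↔
      w ∈ ({(x, a), (x + 1, a), (x - 1, a), (x, 1 - a)} : Finset (ℤ × Fin 2)) := by
    rintro ⟨y, b⟩
    simp only [closedNbhd, Set.mem_insert_iff, SimpleGraph.mem_neighborSet, lad_adj,
      Finset.mem_insert, Finset.mem_singleton, Prod.mk.injEq]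
    fin_cases a <;> fin_cases b <;> simp <;> omega
  set F : Finset (ℤ × Fin 2) := {(x, a), (x + 1, a), (x - 1, a), (x, 1 - a)} with hF
  have hF4 : F.card ≤ 4 := Finset.card_le_four
  rw [hN] at hp hq
  have hsub : closedNbhd ladder (x, a) ∩ S ⊆ (((F.erase p).erase q : Finset (ℤ × Fin 2)) : Set _) := by
    rintro w ⟨hw, hwS⟩
    rw [hN] at hw
    simp only [Finset.coe_erase, Set.mem_sdiff, Finset.mem_coe, Set.mem_singleton_iff]
    exact ⟨⟨hw, fun e => hpS (e ▸ hwS)⟩, fun e => hqS (e ▸ hwS)⟩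
  have h2 := h1.trans (Set.encard_le_encard hsub)
  rw [Set.encard_coe_eq_coe_finsetCard, Finset.card_erase_of_mem (by
    rw [Finset.mem_erase]; exact ⟨fun e => hne e.symm, hq⟩), Finset.card_erase_of_mem hp] at h2
  have : 3 ≤ F.card - 1 - 1 := by exact_mod_cast h2
  omega

theorem lad_gap2 {S : Set (ℤ × Fin 2)} (h : IsErrLD ladder S) {x : ℤ} {a b : Fin 2} (hab : a ≠ b)
    (hp : (x, a) ∉ S) (hq : (x + 2, b) ∉ S) : False := by
  have hu : (x + 1, b) ∈ S := by
    by_contra hu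
    have := lad_dom h (v := (x + 1, b)) (p := (x + 1, b)) (q := (x + 2, b))
      (by simp [closedNbhd]) (by simp [closedNbhd, lad_adj]; omega) hu hq
    simp at this
  have h3 := h.2.2.1 _ hp _ hu
  have hsub : ((ladder.neighborSet (x, a) ∩ S) ∆ (ladder.neighborSet (x + 1, b) ∩ S)) \ {(x + 1, b)}
      ⊆ {(x - 1, a)} := by
    rintro ⟨y, c⟩ hw
    simp only [Set.mem_sdiff, Set.mem_symmDiff, Set.mem_inter_iff, SimpleGraph.mem_neighborSet,
      lad_adj, Set.mem_singleton_iff, Prod.mk.injEq] at hw ⊢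
    have hc : c = a ∨ c = b := by omega
    have e2 : ∀ y, y = x + 2 → (y, b) ∉ S := by rintro y rfl; exact hq
    have e1 : ∀ y, y = x → (y, a) ∉ S := by rintro y rfl; exact hp
    rcases hc with rfl | rfl
    · have := e1 y
      grind
    · have := e2 y
      grind
  have h4 := h3.trans (Set.encard_le_encard hsub)
  rw [Set.encard_singleton] at h4
  exact absurd h4 (by norm_num)

theorem lad_gap {S : Set (ℤ × Fin 2)} (h : IsErrLD ladder S) {x y : ℤ} {a b : Fin 2}
    (hp : (x, a) ∉ S) (hq : (y, b) ∉ S) (h1 : x ≤ y) (h2 : y ≤ x + 2) : (x, a) = (y, b) := by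
  obtain rfl | rfl | rfl : y = x ∨ y = x + 1 ∨ y = x + 2 := by omega
  · refine lad_dom h (v := (y, a)) ?_ ?_ hp hq
    · simp [closedNbhd]
    · simp [closedNbhd, lad_adj]; grind
  · refine lad_dom h (v := (x + 1, a)) ?_ ?_ hp hq
    · simp [closedNbhd, lad_adj]
    · simp [closedNbhd, lad_adj]; grind
  · by_cases hab : a = b
    · subst hab
      refine lad_dom h (v := (x + 1, a)) ?_ ?_ hp hq
      · simp [closedNbhd, lad_adj]
      · simp [closedNbhd, lad_adj]; grind
    · exact (lad_gap2 h hab hp hq).elim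

open Classical in
theorem card_split (S : Set (ℤ × Fin 2)) (r : ℕ) :
    (S ∩ ballSet ladder ((0 : ℤ), (0 : Fin 2)) r).ncard + ((ballF r).filter (· ∉ S)).card
      = (ballF r).card := by
  have : S ∩ ballSet ladder ((0 : ℤ), (0 : Fin 2)) r
      = (((ballF r).filter (· ∈ S) : Finset (ℤ × Fin 2)) : Set _) := by
    ext w; rw [lad_ball_eq]; simp [and_comm]
  rw [this, Set.ncard_coe_finset]
  exact Finset.card_filter_add_card_filter_not _

open Classical in
theorem holes_le {S : Set (ℤ × Fin 2)} (h : IsErrLD ladder S) (r : ℕ) :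
    3 * ((ballF r).filter (· ∉ S)).card ≤ 2 * r + 3 := by
  have : ((ballF r).filter (· ∉ S)).card ≤ (Finset.Icc (0 : ℤ) ((2 * r) / 3)).card := by
    apply Finset.card_le_card_of_injOn (fun p : ℤ × Fin 2 => (p.1 + (r : ℤ)) / 3)
    · rintro ⟨x, a⟩ hx
      simp only [Finset.coe_filter, Set.mem_ofPred_eq, mem_ballF] at hx
      have := abs_le.1 (show |x| ≤ r by omega)
      simp only [Finset.coe_Icc, Set.mem_Icc]
      omega
    · rintro ⟨x, a⟩ hx ⟨y, b⟩ hy hxy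
      simp only [Finset.coe_filter, Set.mem_ofPred_eq] at hx hy hxy
      rcases le_total x y with hle | hle
      · exact lad_gap h hx.2 hy.2 hle (by omega)
      · exact (lad_gap h hy.2 hx.2 hle (by omega)).symm
  rw [Int.card_Icc] at this
  omega

theorem ratio_bdd (S : Set (ℤ × Fin 2)) (r : ℕ) :
    ((S ∩ ballSet ladder ((0 : ℤ), (0 : Fin 2)) r).ncard : ℝ)
      / ((ballSet ladder ((0 : ℤ), (0 : Fin 2)) r).ncard : ℝ) ≤ 1 := by
  apply div_le_one_of_le₀ _ (by positivity)
  have : (ballSet ladder ((0 : ℤ), (0 : Fin 2)) r).Finite := by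
    rw [lad_ball_eq]; exact Finset.finite_toSet _
  exact_mod_cast Set.ncard_le_ncard Set.inter_subset_right this

theorem ball_ncard (r : ℕ) (hr : 1 ≤ r) :
    (ballSet ladder ((0 : ℤ), (0 : Fin 2)) r).ncard = 4 * r := by
  rw [lad_ball_eq, Set.ncard_coe_finset, card_ballF r hr]

theorem density_lower {S : Set (ℤ × Fin 2)} (h : IsErrLD ladder S) :
    (5 : ℝ) / 6 ≤ density ladder S ((0 : ℤ), (0 : Fin 2)) := by
  classical
  have ht : Filter.Tendsto (fun r : ℕ => (5 : ℝ) / 6 - (1 / 4) * ((r : ℝ))⁻¹) Filter.atTop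
      (nhds (5 / 6)) := by
    have := (tendsto_inv_atTop_nhds_zero_nat (𝕜 := ℝ)).const_mul (1 / 4 : ℝ)
    simpa using this.const_sub ((5 : ℝ) / 6)
  rw [← ht.limsup_eq]
  refine Filter.limsup_le_limsup ?_ ht.isBoundedUnder_ge.isCoboundedUnder_le ?_
  rotate_left
  · exact ⟨1, by simpa using ⟨0, fun r _ => ratio_bdd S r⟩⟩
  · filter_upwards [Filter.eventually_ge_atTop 1] with r hr
    have h1 := card_split S r
    have h2 := holes_le h r
    rw [card_ballF r hr] at h1
    rw [ball_ncard r hr]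
    have h3 : 10 * r ≤ 3 * (S ∩ ballSet ladder ((0 : ℤ), (0 : Fin 2)) r).ncard + 3 := by omega
    have h3' : 10 * (r : ℝ) ≤ 3 * ((S ∩ ballSet ladder ((0 : ℤ), (0 : Fin 2)) r).ncard : ℝ) + 3 := by
      exact_mod_cast h3
    have hr' : (0 : ℝ) < r := by exact_mod_cast hr
    rw [le_div_iff₀ (by push_cast; positivity)]
    push_cast
    field_simp
    linarith

/-- The extremal set. -/
def exS : Set (ℤ × Fin 2) := {p | ¬ (p.2 = 0 ∧ p.1 % 3 = 0)}

theorem mem_exS (x : ℤ) (a : Fin 2) : (x, a) ∈ exS ↔ ¬ (a = 0 ∧ x % 3 = 0) := Iff.rfl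

theorem three_le {T : Set (ℤ × Fin 2)} (p q s : ℤ × Fin 2) (hp : p ∈ T) (hq : q ∈ T) (hs : s ∈ T)
    (h1 : p ≠ q) (h2 : p ≠ s) (h3 : q ≠ s) : 3 ≤ T.encard := by
  rw [← Set.encard_eq_three.2 ⟨p, q, s, h1, h2, h3, rfl⟩]
  apply Set.encard_le_encard
  rintro w (rfl | rfl | rfl) <;> assumption

theorem two_le {T : Set (ℤ × Fin 2)} (p q : ℤ × Fin 2) (hp : p ∈ T) (hq : q ∈ T)
    (h1 : p ≠ q) : 2 ≤ T.encard := by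
  rw [← Set.encard_pair h1]
  apply Set.encard_le_encard
  rintro w (rfl | rfl) <;> assumption

theorem exS_errLD : IsErrLD ladder exS := by
  refine ⟨?_, ?_, ?_, ?_⟩
  · rintro ⟨x, a⟩
    obtain rfl | rfl : a = 0 ∨ a = 1 := by omega
    · obtain h | h | h : x % 3 = 0 ∨ x % 3 = 1 ∨ x % 3 = 2 := by omega
      · apply three_le (x - 1, 0) (x + 1, 0) (x, 1) <;> simp [closedNbhd, lad_adj, mem_exS] <;> omega
      · apply three_le (x, 0) (x + 1, 0) (x, 1) <;> simp [closedNbhd, lad_adj, mem_exS] <;> omega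
      · apply three_le (x - 1, 0) (x, 0) (x, 1) <;> simp [closedNbhd, lad_adj, mem_exS] <;> omega
    · apply three_le (x - 1, 1) (x + 1, 1) (x, 1) <;> simp [closedNbhd, lad_adj, mem_exS] <;> omega
  · rintro ⟨x, a⟩ hx ⟨y, b⟩ hy hne
    rw [Set.one_le_encard_iff_nonempty]
    by_contra hcon
    rw [Set.not_nonempty_iff_eq_empty, Set.eq_empty_iff_forall_notMem] at hcon
    have k1 := hcon (x + 1, a)
    have k2 := hcon (x - 1, a)
    have k3 := hcon (x, 1 - a)
    have k4 := hcon (y + 1, b)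
    have k5 := hcon (y - 1, b)
    have k6 := hcon (y, 1 - b)
    clear hcon
    obtain rfl | rfl : a = 0 ∨ a = 1 := by omega
    all_goals obtain rfl | rfl : b = 0 ∨ b = 1 := by omega
    all_goals
      simp [Set.mem_symmDiff, lad_adj, mem_exS] at hx hy hne k1 k2 k3 k4 k5 k6
      omega
  · rintro ⟨x, a⟩ hx ⟨y, b⟩ hy
    simp only [mem_exS, not_not] at hx
    obtain ⟨rfl, hx⟩ := hx
    obtain rfl | rfl : b = 0 ∨ b = 1 := by omega
    · have : y % 3 ≠ 0 := by simpa [mem_exS] using hy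
      obtain h | h : y < x ∨ x < y := by
        rcases lt_trichotomy x y with h | rfl | h
        · exact Or.inr h
        · exact absurd hx this
        · exact Or.inl h
      · apply two_le (x + 1, 0) (x, 1) <;> simp [Set.mem_symmDiff, lad_adj, mem_exS] <;> omega
      · apply two_le (x - 1, 0) (x, 1) <;> simp [Set.mem_symmDiff, lad_adj, mem_exS] <;> omega
    · by_cases h1 : y = x + 1
      · subst h1
        apply two_le (x - 1, 0) (x + 2, 1) <;> simp [Set.mem_symmDiff, lad_adj, mem_exS] <;> omega
      · by_cases h2 : y = x - 1
        · subst h2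
          apply two_le (x + 1, 0) (x - 2, 1) <;> simp [Set.mem_symmDiff, lad_adj, mem_exS] <;> omega
        · apply two_le (x + 1, 0) (x - 1, 0) <;> simp [Set.mem_symmDiff, lad_adj, mem_exS] <;> omega
  · rintro ⟨x, a⟩ hx ⟨y, b⟩ hy hne
    simp only [mem_exS, not_not] at hx hy
    obtain ⟨rfl, hx⟩ := hx
    obtain ⟨rfl, hy⟩ := hy
    have hne' : y ≠ x := by rintro rfl; exact hne rfl
    apply three_le (x + 1, 0) (x - 1, 0) (x, 1) <;>
      simp [Set.mem_symmDiff, lad_adj, mem_exS] <;> omega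

open Classical in
theorem holes_ge (r : ℕ) : 2 * r ≤ 3 * ((ballF r).filter (· ∉ exS)).card + 1 := by
  have : (Finset.Icc (-((r : ℤ) / 3)) ((r : ℤ) / 3)).card ≤ ((ballF r).filter (· ∉ exS)).card := by
    apply Finset.card_le_card_of_injOn (fun k => (3 * k, 0))
    · intro k hk
      simp only [Finset.coe_Icc, Set.mem_Icc] at hk
      have : |3 * k| ≤ r := abs_le.2 (by omega)
      simp only [Finset.coe_filter, Set.mem_ofPred_eq, mem_ballF, mem_exS]
      simpa using this
    · intro k _ l _ hkl
      simpa using hkl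
  rw [Int.card_Icc] at this
  omega

theorem exS_upper : density ladder exS ((0 : ℤ), (0 : Fin 2)) ≤ (5 : ℝ) / 6 := by
  classical
  have ht : Filter.Tendsto (fun r : ℕ => (5 : ℝ) / 6 + (1 / 12) * ((r : ℝ))⁻¹) Filter.atTop
      (nhds (5 / 6)) := by
    have := (tendsto_inv_atTop_nhds_zero_nat (𝕜 := ℝ)).const_mul (1 / 12 : ℝ)
    simpa using this.const_add ((5 : ℝ) / 6)
  rw [← ht.limsup_eq]
  refine Filter.limsup_le_limsup ?_ ?_ ht.isBoundedUnder_le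
  · filter_upwards [Filter.eventually_ge_atTop 1] with r hr
    have h1 := card_split exS r
    have h2 := holes_ge r
    rw [card_ballF r hr] at h1
    rw [ball_ncard r hr]
    have h3 : 3 * (exS ∩ ballSet ladder ((0 : ℤ), (0 : Fin 2)) r).ncard ≤ 10 * r + 1 := by omega
    have h3' : 3 * ((exS ∩ ballSet ladder ((0 : ℤ), (0 : Fin 2)) r).ncard : ℝ) ≤ 10 * (r : ℝ) + 1 := by
      exact_mod_cast h3
    have hr' : (0 : ℝ) < r := by exact_mod_cast hr
    rw [div_le_iff₀ (by push_cast; positivity)]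
    push_cast
    field_simp
    linarith
  · apply Filter.IsBoundedUnder.isCoboundedUnder_le
    exact ⟨0, by simpa using ⟨0, fun r _ => by positivity⟩⟩

theorem errLD_ladder_density :
    (∀ S : Set (ℤ × Fin 2), IsErrLD ladder S →
      (5 : ℝ) / 6 ≤ density ladder S ((0 : ℤ), (0 : Fin 2))) ∧
    (∃ S : Set (ℤ × Fin 2), IsErrLD ladder S ∧
      density ladder S ((0 : ℤ), (0 : Fin 2)) = (5 : ℝ) / 6) :=
  ⟨fun _ h => density_lower h, exS, exS_errLD, le_antisymm exS_upper (density_lower exS_errLD)⟩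
end

section
/- Let G be a twin-free cubic (3-regular) simple graph, and let S̄ ⊆ V(G) be a set of vertices such that for any two distinct x, y ∈ S̄ every walk in G from x to y has length at least 5. Then S = V(G) − S̄ is an ERR:LD set of G. -/
open scoped symmDiff

variable {V : Type*}

theorem aux_one {s : Set V} {a : V} (ha : a ∈ s) : 1 ≤ s.encard :=
  Set.one_le_encard_iff_nonempty.2 ⟨a, ha⟩

theorem aux_two {s : Set V} {a b : V} (ha : a ∈ s) (hb : b ∈ s) (hab : a ≠ b) :
    2 ≤ s.encard := by
  rw [← Set.encard_pair hab]
  exact Set.encard_le_encard (by rintro x (rfl | rfl) <;> assumption)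

theorem aux_three {s : Set V} {a b c : V} (ha : a ∈ s) (hb : b ∈ s) (hc : c ∈ s)
    (hab : a ≠ b) (hac : a ≠ c) (hbc : b ≠ c) : 3 ≤ s.encard := by
  have h : ({a, b, c} : Set V).encard = 3 :=
    Set.encard_eq_three.2 ⟨a, b, c, hab, hac, hbc, rfl⟩
  rw [← h]
  exact Set.encard_le_encard (by rintro x (rfl | rfl | rfl) <;> assumption)

theorem aux_key (G : SimpleGraph V)
    (hcubic : ∀ v : V, (G.neighborSet v).encard = 3) (htf : TwinFree G)
    (u v : V) (huv : u ≠ v) : ∃ a, G.Adj v a ∧ ¬ G.Adj u a ∧ a ≠ u := by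
  by_contra hcon
  push Not at hcon
  have hfin : ∀ w, (G.neighborSet w).Finite := fun w =>
    Set.finite_of_encard_eq_coe (k := 3) (by rw [hcubic w]; rfl)
  by_cases hadj : G.Adj u v
  · have hc : ∀ w, (closedNbhd G w).encard = 4 := by
      intro w
      unfold closedNbhd
      rw [Set.encard_insert_of_notMem (by simp), hcubic w]
      norm_num
    refine htf u v huv (Or.inr (Eq.symm ?_))
    refine Set.Finite.eq_of_subset_of_encard_le ((hfin v).insert v) ?_
      (by rw [hc, hc])
    rintro x (rfl | hx)
    · exact Or.inr hadj
    · by_cases hux : G.Adj u x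
      · exact Or.inr hux
      · exact Or.inl (hcon x hx hux)
  · refine htf u v huv (Or.inl (Eq.symm ?_))
    refine Set.Finite.eq_of_subset_of_encard_le (hfin v) ?_ (by rw [hcubic, hcubic])
    intro x hx
    by_contra hux
    have := hcon x hx hux
    subst this
    exact hadj (G.adj_symm hx)

theorem errLD_of_distant_nondetectors (G : SimpleGraph V)
    (hcubic : ∀ v : V, (G.neighborSet v).encard = 3) (htf : TwinFree G)
    (Sbar : Set V)
    (hfar : ∀ x ∈ Sbar, ∀ y ∈ Sbar, x ≠ y → ∀ w : G.Walk x y, 5 ≤ w.length) :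
    IsErrLD G Sbarᶜ := by
  have h2 : ∀ x ∈ Sbar, ∀ y ∈ Sbar, ∀ z, G.Adj z x → G.Adj z y → x = y := by
    intro x hx y hy z k1 k2
    by_contra hne
    have := hfar x hx y hy hne (.cons k1.symm (.cons k2 .nil))
    simp at this
  have h1 : ∀ x ∈ Sbar, ∀ y ∈ Sbar, ¬ G.Adj x y := by
    intro x hx y hy h
    have := hfar x hx y hy h.ne (.cons h .nil)
    simp at this
  have h3 : ∀ x ∈ Sbar, ∀ y ∈ Sbar, ∀ z w, G.Adj z x → G.Adj z w → G.Adj w y → x = y := by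
    intro x hx y hy z w k1 k2 k3
    by_contra hne
    have := hfar x hx y hy hne (.cons k1.symm (.cons k2 (.cons k3 .nil)))
    simp at this
  have h4 : ∀ x ∈ Sbar, ∀ y ∈ Sbar, ∀ z t w, G.Adj z x → G.Adj z t → G.Adj w t →
      G.Adj w y → x = y := by
    intro x hx y hy z t w k1 k2 k3 k4
    by_contra hne
    have := hfar x hx y hy hne (.cons k1.symm (.cons k2 (.cons k3.symm (.cons k4 .nil))))
    simp at this
  have hnb : ∀ v, ∃ a b c, G.Adj v a ∧ G.Adj v b ∧ G.Adj v c ∧ a ≠ b ∧ a ≠ c ∧ b ≠ c := by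
    intro v
    obtain ⟨a, b, c, hab, hac, hbc, h⟩ := Set.encard_eq_three.1 (hcubic v)
    refine ⟨a, b, c, ?_, ?_, ?_, hab, hac, hbc⟩ <;>
      rw [← SimpleGraph.mem_neighborSet, h] <;> simp
  have hother : ∀ v a, ∃ b, G.Adj v b ∧ a ≠ b := by
    intro v a
    obtain ⟨p, q, -, hp, hq, -, hpq, -⟩ := hnb v
    by_cases h : a = p
    · exact ⟨q, hq, h ▸ hpq⟩
    · exact ⟨p, hp, h⟩
  have key := aux_key G hcubic htf
  refine ⟨?_, ?_, ?_, ?_⟩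
  · intro v
    obtain ⟨a, b, c, ha, hb, hc, hab, hac, hbc⟩ := hnb v
    have mem : ∀ x, G.Adj v x → x ∉ Sbar → x ∈ closedNbhd G v ∩ Sbarᶜ :=
      fun x hx hS => ⟨Or.inr hx, hS⟩
    by_cases hv : v ∈ Sbar
    · have hS : ∀ x, G.Adj v x → x ∉ Sbar := fun x hx hxS => h1 v hv x hxS hx
      exact aux_three (mem a ha (hS a ha)) (mem b hb (hS b hb)) (mem c hc (hS c hc)) hab hac hbc
    · have memv : v ∈ closedNbhd G v ∩ Sbarᶜ := ⟨Or.inl rfl, hv⟩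
      by_cases hA : a ∈ Sbar
      · exact aux_three memv (mem b hb fun h => hab (h2 a hA b h v ha hb))
          (mem c hc fun h => hac (h2 a hA c h v ha hc)) hb.ne hc.ne hbc
      · by_cases hB : b ∈ Sbar
        · exact aux_three memv (mem a ha hA)
            (mem c hc fun h => hbc (h2 b hB c h v hb hc)) ha.ne hc.ne hac
        · exact aux_three memv (mem a ha hA) (mem b hb hB) ha.ne hb.ne hab
  · intro v hv u hu huv
    obtain ⟨a, hva, hua, hau⟩ := key u v huv
    obtain ⟨b, hub, hvb, hbv⟩ := key v u huv.symm
    have good : ∀ x, G.Adj v x → ¬ G.Adj u x → x ≠ u → x ∉ Sbar →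
        1 ≤ ((((G.neighborSet v ∩ Sbarᶜ) ∆ (G.neighborSet u ∩ Sbarᶜ)) \ {v, u}).encard) := by
      intro x k1 k2 k3 hS
      refine aux_one (a := x) ⟨Or.inl ⟨⟨k1, hS⟩, fun k => k2 k.1⟩, ?_⟩
      rintro (k | k)
      · exact k1.ne k.symm
      · exact k3 k
    by_cases hA : a ∈ Sbar
    swap
    · exact good a hva hua hau hA
    by_cases hB : b ∈ Sbar
    swap
    · refine aux_one (a := b) ⟨Or.inr ⟨⟨hub, hB⟩, fun k => hvb k.1⟩, ?_⟩
      rintro (k | k)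
      · exact hbv k
      · exact hub.ne k.symm
    have hab : a ≠ b := fun h => hvb (h ▸ hva)
    have hadj : ¬ G.Adj v u := fun h => hab (h3 a hA b hB v u hva h hub)
    obtain ⟨c, hvc, hac⟩ := hother v a
    exact good c hvc (fun h => hab (h4 a hA b hB v c u hva hvc h hub))
      (fun h => hadj (h ▸ hvc)) (fun h => hac (h2 a hA c h v hva hvc))
  · intro v hv u hu
    have hv : v ∈ Sbar := by simpa using hv
    have huv : u ≠ v := fun h => hu (h ▸ hv)
    obtain ⟨a, hva, hua, hau⟩ := key u v huv
    obtain ⟨b, hub, hvb, hbv⟩ := key v u huv.symm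
    have good : ∀ x, G.Adj v x → ¬ G.Adj u x → x ≠ u →
        x ∈ ((G.neighborSet v ∩ Sbarᶜ) ∆ (G.neighborSet u ∩ Sbarᶜ)) \ {u} := by
      intro x k1 k2 k3
      exact ⟨Or.inl ⟨⟨k1, fun hS => h1 v hv x hS k1⟩, fun k => k2 k.1⟩, k3⟩
    by_cases hB : b ∈ Sbar
    · have hadj : ¬ G.Adj u v := fun h => hbv (h2 b hB v hv u hub h)
      obtain ⟨c, hvc, hac⟩ := hother v a
      exact aux_two (good a hva hua hau)
        (good c hvc (fun h => hbv (h3 b hB v hv u c hub h hvc.symm))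
          (fun h => hadj (h ▸ hvc.symm))) hac
    · exact aux_two (good a hva hua hau)
        ⟨Or.inr ⟨⟨hub, hB⟩, fun k => hvb k.1⟩, fun k => hub.ne (Eq.symm k)⟩
        (fun h => hvb (h ▸ hva))
  · intro v hv u hu huv
    have hv : v ∈ Sbar := by simpa using hv
    have hu : u ∈ Sbar := by simpa using hu
    have good : ∀ x, G.Adj v x →
        x ∈ (G.neighborSet v ∩ Sbarᶜ) ∆ (G.neighborSet u ∩ Sbarᶜ) := by
      intro x h
      exact Or.inl ⟨⟨h, fun hS => h1 v hv x hS h⟩,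
        fun k => huv (h2 u hu v hv x (G.adj_symm k.1) h.symm)⟩
    obtain ⟨a, b, c, ha, hb, hc, hab, hac, hbc⟩ := hnb v
    exact aux_three (good a ha) (good b hb) (good c hc) hab hac hbc
end

section
/- If G is a finite twin-free cubic (3-regular) simple graph of order n ≥ 46, then G has an ERR:LD set S with |S| ≤ ⌈45n/46⌉. -/
open scoped symmDiff

variable {V : Type*}

/-- `y` is reachable from `x` by a walk of length at most `k`. -/
def Near (G : SimpleGraph V) (k : ℕ) (x y : V) : Prop := ∃ p : G.Walk x y, p.length ≤ k

theorem Near.symm' {G : SimpleGraph V} {k : ℕ} {x y : V} (h : Near G k x y) : Near G k y x := by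
  obtain ⟨p, hp⟩ := h
  exact ⟨p.reverse, by simpa using hp⟩

theorem Near.mono' {G : SimpleGraph V} {k l : ℕ} {x y : V} (h : Near G k x y) (hl : k ≤ l) :
    Near G l x y := by
  obtain ⟨p, hp⟩ := h
  exact ⟨p, hp.trans hl⟩

theorem near_zero {G : SimpleGraph V} {x y : V} : Near G 0 x y ↔ x = y := by
  constructor
  · rintro ⟨p, hp⟩
    exact SimpleGraph.Walk.eq_of_length_eq_zero (Nat.le_zero.mp hp)
  · rintro rfl
    exact ⟨SimpleGraph.Walk.nil, by simp⟩

theorem Near.snoc {G : SimpleGraph V} {k : ℕ} {x y z : V} (h : Near G k x y) (hz : G.Adj y z) :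
    Near G (k + 1) x z := by
  obtain ⟨p, hp⟩ := h
  exact ⟨p.concat hz, by simpa using hp⟩

theorem near_succ {G : SimpleGraph V} {k : ℕ} {x y : V} (h : Near G (k + 1) x y)
    (hk : ¬ Near G k x y) : ∃ z, Near G k x z ∧ G.Adj z y := by
  obtain ⟨p, hp⟩ := h.symm'
  cases p with
  | nil => exact absurd ((near_zero.mpr rfl).mono' (Nat.zero_le k)) hk
  | cons e q =>
    simp only [SimpleGraph.Walk.length_cons, add_le_add_iff_right] at hp
    exact ⟨_, Near.symm' ⟨q, hp⟩, e.symm⟩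

theorem near_ball_card [Fintype V] (G : SimpleGraph V)
    (hcubic : ∀ v : V, (G.neighborSet v).ncard = 3) (x : V) :
    {y | Near G 4 x y}.ncard ≤ 46 := by
  classical
  have key : ∀ k, {y | Near G (k + 1) x y ∧ ¬ Near G k x y}.ncard ≤ 3 * 2 ^ k := by
    intro k
    induction k with
    | zero =>
      calc _ ≤ (G.neighborSet x).ncard := by
            apply Set.ncard_le_ncard _ (Set.toFinite _)
            rintro y ⟨h1, h2⟩
            obtain ⟨z, hz, hzy⟩ := near_succ h1 h2
            rw [near_zero] at hz
            subst hz
            exact hzy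
        _ ≤ _ := by simp [hcubic]
    | succ k ih =>
      set L := {y | Near G (k + 1) x y ∧ ¬ Near G k x y} with hL
      have hsub : {y | Near G (k + 1 + 1) x y ∧ ¬ Near G (k + 1) x y} ⊆
          ⋃ z ∈ L.toFinset, (G.neighborSet z \ {y | Near G k x y}) := by
        rintro y ⟨h1, h2⟩
        obtain ⟨z, hz, hzy⟩ := near_succ h1 h2
        simp only [Set.mem_iUnion]
        refine ⟨z, ?_, hzy, fun h => h2 (h.mono' (by omega))⟩
        rw [Set.mem_toFinset]
        exact ⟨hz, fun h => h2 (h.snoc hzy)⟩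
      calc _ ≤ _ := Set.ncard_le_ncard hsub (Set.toFinite _)
        _ ≤ ∑ z ∈ L.toFinset, (G.neighborSet z \ {y | Near G k x y}).ncard :=
            Finset.set_ncard_biUnion_le _ _
        _ ≤ ∑ z ∈ L.toFinset, 2 := by
            apply Finset.sum_le_sum
            intro z hz
            rw [Set.mem_toFinset] at hz
            obtain ⟨w, hw, hwz⟩ := near_succ hz.1 hz.2
            calc _ ≤ (G.neighborSet z \ {w}).ncard := by
                  apply Set.ncard_le_ncard _ (Set.toFinite _)
                  rintro y ⟨h1, h2⟩
                  refine ⟨h1, ?_⟩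
                  rintro rfl
                  exact h2 hw
              _ ≤ 2 := by
                  rw [Set.ncard_sdiff_singleton_of_mem (show w ∈ G.neighborSet z from hwz.symm),
                    hcubic]
        _ ≤ _ := by
            rw [Finset.sum_const, smul_eq_mul, ← Set.ncard_eq_toFinset_card']
            rw [pow_succ]
            omega
  have step : ∀ k, {y | Near G (k + 1) x y}.ncard ≤ {y | Near G k x y}.ncard + 3 * 2 ^ k := by
    intro k
    calc _ ≤ ({y | Near G k x y} ∪ {y | Near G (k + 1) x y ∧ ¬ Near G k x y}).ncard := by
          apply Set.ncard_le_ncard _ (Set.toFinite _)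
          intro y hy
          by_cases h : Near G k x y
          · exact Or.inl h
          · exact Or.inr ⟨hy, h⟩
      _ ≤ _ := (Set.ncard_union_le _ _).trans (Nat.add_le_add_left (key k) _)
  have h0 : {y | Near G 0 x y}.ncard = 1 := by
    rw [Set.ncard_eq_one]
    exact ⟨x, by ext y; simp [near_zero, eq_comm]⟩
  have s0 := step 0
  have s1 := step 1
  have s2 := step 2
  have s3 := step 3
  norm_num at s0 s1 s2 s3
  omega

theorem exists_packing [Fintype V] (G : SimpleGraph V)
    (hcubic : ∀ v : V, (G.neighborSet v).ncard = 3) :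
    ∃ D : Finset V, (∀ a ∈ D, ∀ b ∈ D, Near G 4 a b → a = b) ∧
      Fintype.card V ≤ 46 * D.card := by
  classical
  obtain ⟨D, hD, hmax⟩ := Finset.exists_max_image
    (Finset.univ.filter fun D : Finset V => ∀ a ∈ D, ∀ b ∈ D, Near G 4 a b → a = b)
    Finset.card ⟨∅, by simp⟩
  rw [Finset.mem_filter] at hD
  refine ⟨D, hD.2, ?_⟩
  have hcov : (Set.univ : Set V) ⊆ ⋃ d ∈ D, {y | Near G 4 d y} := by
    intro v _
    by_contra hv
    simp only [Set.mem_iUnion, Set.mem_ofPred_eq, not_exists] at hv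
    have hvD : v ∉ D := fun h => hv v h ((near_zero.mpr rfl).mono' (Nat.zero_le 4))
    have := hmax (insert v D) (by
      rw [Finset.mem_filter]
      refine ⟨Finset.mem_univ _, ?_⟩
      intro a ha b hb hab
      rw [Finset.mem_insert] at ha hb
      rcases ha with rfl | ha <;> rcases hb with rfl | hb
      · rfl
      · exact absurd hab.symm' (hv b hb)
      · exact absurd hab (hv a ha)
      · exact hD.2 a ha b hb hab)
    rw [Finset.card_insert_of_notMem hvD] at this
    omega
  calc Fintype.card V = (Set.univ : Set V).ncard := by
        rw [Set.ncard_univ, Nat.card_eq_fintype_card]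
    _ ≤ _ := Set.ncard_le_ncard hcov (Set.toFinite _)
    _ ≤ ∑ d ∈ D, {y | Near G 4 d y}.ncard := Finset.set_ncard_biUnion_le _ _
    _ ≤ ∑ d ∈ D, 46 := Finset.sum_le_sum fun d _ => near_ball_card G hcubic d
    _ = _ := by rw [Finset.sum_const, smul_eq_mul, mul_comm]

theorem exists_diff_of_ncard {A B : Set V} (hA : A.Finite) (h : A.ncard = B.ncard)
    (hne : A ≠ B) : ∃ b ∈ B, b ∉ A := by
  by_contra hc
  push Not at hc
  exact hne (Set.eq_of_subset_of_ncard_le hc h.le hA).symm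

theorem twin_witness [Fintype V] (G : SimpleGraph V)
    (hcubic : ∀ v : V, (G.neighborSet v).ncard = 3) (htf : TwinFree G) {u v : V} (huv : u ≠ v) :
    ∃ a, G.Adj u a ∧ ¬ G.Adj v a ∧ a ≠ v := by
  have h := htf u v huv
  push Not at h
  have hc : ∀ v, (closedNbhd G v).ncard = 4 := fun v => by
    rw [closedNbhd, Set.ncard_insert_of_notMem (by simp) (Set.toFinite _), hcubic]
  by_cases hadj : G.Adj u v
  · obtain ⟨a, ha, ha'⟩ := exists_diff_of_ncard (Set.toFinite _)
      ((hc v).trans (hc u).symm) (Ne.symm h.2)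
    simp only [closedNbhd, Set.mem_insert_iff, SimpleGraph.mem_neighborSet, not_or] at ha ha'
    rcases ha with rfl | ha
    · exact absurd hadj.symm ha'.2
    · exact ⟨a, ha, ha'.2, ha'.1⟩
  · obtain ⟨a, ha, ha'⟩ := exists_diff_of_ncard (Set.toFinite _)
      ((hcubic v).trans (hcubic u).symm) (Ne.symm h.1)
    exact ⟨a, ha, ha', by rintro rfl; exact hadj ha⟩

theorem errLD_cubic_upper_bound [Fintype V] (G : SimpleGraph V)
    (hcubic : ∀ v : V, (G.neighborSet v).ncard = 3) (htf : TwinFree G)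
    (hn : 46 ≤ Fintype.card V) :
    ∃ S : Set V, IsErrLD G S ∧
      (S.ncard : ℤ) ≤ ⌈(45 * (Fintype.card V : ℚ)) / 46⌉ := by
  classical
  obtain ⟨D, hD, hcard⟩ := exists_packing G hcubic
  have hN : ∀ v, (G.neighborSet v).encard = 3 := fun v => by
    rw [← (Set.toFinite (G.neighborSet v)).cast_ncard_eq, hcubic]; rfl
  have n0 : ∀ v, Near G 0 v v := fun v => near_zero.mpr rfl
  -- a second element of a neighborhood
  have hother : ∀ v a, ∃ b, G.Adj v b ∧ b ≠ a := by
    intro v a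
    have h1 : 1 < (G.neighborSet v).ncard := by rw [hcubic]; norm_num
    obtain ⟨b, hb, hba⟩ := Set.exists_ne_of_one_lt_ncard h1 a
    exact ⟨b, hb, hba⟩
  refine ⟨(↑D : Set V)ᶜ, ⟨?_, ?_, ?_, ?_⟩, ?_⟩
  · intro v
    have hc : (closedNbhd G v).encard = 4 := by
      rw [closedNbhd, Set.encard_insert_of_notMem (by simp), hN]; norm_num
    have hnear : ∀ w ∈ closedNbhd G v, Near G 1 v w := by
      intro w hw
      rcases hw with rfl | hw
      · exact (n0 w).mono' (by omega)
      · exact (n0 v).snoc hw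
    have htrans : ∀ a b, Near G 1 v a → Near G 1 v b → Near G 4 a b := by
      rintro a b ⟨p, hp⟩ ⟨q, hq⟩
      exact ⟨p.reverse.append q, by simp; omega⟩
    by_cases hex : ∃ d ∈ D, d ∈ closedNbhd G v
    · obtain ⟨d, hd, hdv⟩ := hex
      have h3 : (closedNbhd G v \ {d}).encard = 3 := by
        have := Set.encard_sdiff_singleton_add_one hdv
        rw [hc] at this
        have h4 : (4 : ℕ∞) = 3 + 1 := by norm_num
        rw [h4] at this
        exact (ENat.add_left_injective_of_ne_top (by simp)) this
      rw [← h3]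
      apply Set.encard_le_encard
      rintro w ⟨hw, hwd⟩
      refine ⟨hw, fun hwD => hwd ?_⟩
      exact hD w hwD d hd (htrans w d (hnear w hw) (hnear d hdv))
    · push Not at hex
      calc (3 : ℕ∞) ≤ (closedNbhd G v).encard := by rw [hc]; norm_num
        _ ≤ (closedNbhd G v ∩ (↑D : Set V)ᶜ).encard :=
            Set.encard_le_encard (fun w hw => ⟨hw, fun hwD => hex w hwD hw⟩)
  · intro v hv u hu huv
    rw [Set.one_le_encard_iff_nonempty]
    obtain ⟨a, ha, ha', hav⟩ := twin_witness G hcubic htf huv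
    obtain ⟨b, hb, hb', hbu⟩ := twin_witness G hcubic htf huv.symm
    by_cases haD : a ∈ D
    · by_cases hbD : b ∈ D
      · have hab : a ≠ b := by rintro rfl; exact ha' hb
        have hfar : ¬ Near G 4 a b := fun h => hab (hD a haD b hbD h)
        obtain ⟨c, hc, hca⟩ := hother u a
        have hcv : ¬ G.Adj v c := fun h => hfar
          (((((n0 a).snoc ha.symm).snoc hc).snoc h.symm).snoc hb)
        have hnv : c ≠ v := by
          rintro rfl
          exact hfar (((((n0 a).snoc ha.symm).snoc hc).snoc hb).mono' (by omega))
        refine ⟨c, Or.inr ⟨⟨hc, ?_⟩, fun h => hcv h.1⟩, ?_⟩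
        · intro hcD
          exact hca (hD c hcD a haD ((((n0 c).snoc hc.symm).snoc ha).mono' (by omega)))
        · rintro (h | h)
          · exact hnv h
          · exact hc.ne h.symm
      · refine ⟨b, Or.inl ⟨⟨hb, hbD⟩, fun h => hb' h.1⟩, ?_⟩
        rintro (h | h)
        · exact hb.ne h.symm
        · exact hbu h
    · refine ⟨a, Or.inr ⟨⟨ha, haD⟩, fun h => ha' h.1⟩, ?_⟩
      rintro (h | h)
      · exact hav h
      · exact ha.ne h.symm
  · intro v hv u hu
    have hvD : v ∈ D := by simpa using hv
    have huD : u ∉ D := hu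
    have huv : u ≠ v := by rintro rfl; exact huD hvD
    have hNv : ∀ w, G.Adj v w → w ∉ D := fun w hw hwD =>
      hw.ne (hD v hvD w hwD (((n0 v).snoc hw).mono' (by omega)))
    obtain ⟨a, ha, ha', hau⟩ := twin_witness G hcubic htf huv.symm
    obtain ⟨b, hb, hb', hbv⟩ := twin_witness G hcubic htf huv
    by_cases hbD : b ∈ D
    · have hfar : ¬ Near G 4 v b := fun h => hbv (hD v hvD b hbD h).symm
      calc (2 : ℕ∞) ≤ (G.neighborSet v).encard := by rw [hN]; norm_num
        _ ≤ _ := Set.encard_le_encard ?_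
      intro w hw
      refine ⟨Or.inl ⟨⟨hw, hNv w hw⟩, fun h => ?_⟩, ?_⟩
      · exact hfar (((((n0 v).snoc hw).snoc (SimpleGraph.Adj.symm h.1)).snoc hb).mono' (by omega))
      · rintro rfl
        exact hfar ((((n0 v).snoc hw).snoc hb).mono' (by omega))
    · have hab : a ≠ b := by rintro rfl; exact ha' hb
      rw [← Set.encard_pair hab]
      apply Set.encard_le_encard
      rintro w (rfl | rfl)
      · exact ⟨Or.inl ⟨⟨ha, hNv w ha⟩, fun h => ha' h.1⟩, hau⟩
      · exact ⟨Or.inr ⟨⟨hb, hbD⟩, fun h => hb' h.1⟩, fun h => hb.ne h.symm⟩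
  · intro v hv u hu huv
    have hvD : v ∈ D := by simpa using hv
    have huD : u ∈ D := by simpa using hu
    rw [← hN v]
    apply Set.encard_le_encard
    intro w hw
    refine Or.inl ⟨⟨hw, fun hwD => ?_⟩, fun h => ?_⟩
    · exact SimpleGraph.Adj.ne hw (hD v hvD w hwD (((n0 v).snoc hw).mono' (by omega)))
    · exact huv (hD v hvD u huD
        ((((n0 v).snoc hw).snoc (SimpleGraph.Adj.symm h.1)).mono' (by omega))).symm
  · have h1 : D.card + ((↑D : Set V)ᶜ).ncard = Fintype.card V := by
      rw [← Set.ncard_coe_finset, Set.ncard_add_ncard_compl, Nat.card_eq_fintype_card]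
    have h2 : (((↑D : Set V)ᶜ).ncard : ℚ) ≤ 45 * (Fintype.card V : ℚ) / 46 := by
      rw [le_div_iff₀ (by norm_num)]
      have : ((↑D : Set V)ᶜ).ncard * 46 ≤ 45 * Fintype.card V := by omega
      exact_mod_cast this
    have h3 := h2.trans (Int.le_ceil _)
    exact_mod_cast h3
end

section
/- Every ERR:LD set of the infinite hexagonal grid HEX has density at least 3/4, and there exists an ERR:LD set of HEX whose density equals 3/4; thus the minimum ERR:LD density of HEX is 3/4. -/
open scoped symmDiff

variable {V : Type*}

/-- The infinite hexagonal grid (brick-wall representation on `ℤ × ℤ`). -/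
def hexGrid : SimpleGraph (ℤ × ℤ) :=
  SimpleGraph.fromRel (fun p q =>
    (p.2 = q.2 ∧ (p.1 = q.1 + 1 ∨ q.1 = p.1 + 1)) ∨
    (p.1 = q.1 ∧ q.2 = p.2 + 1 ∧ Even (p.1 + p.2)))

namespace HexAux

/-- Open neighborhood as a finset. -/
def nF (v : ℤ × ℤ) : Finset (ℤ × ℤ) :=
  {(v.1 + 1, v.2), (v.1 - 1, v.2), (v.1, v.2 + 1 - 2 * ((v.1 + v.2) % 2))}

/-- Closed neighborhood as a finset. -/
def cF (v : ℤ × ℤ) : Finset (ℤ × ℤ) := insert v (nF v)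

lemma mem_nF {v w : ℤ × ℤ} : w ∈ nF v ↔ (w.2 = v.2 ∧ (w.1 = v.1 + 1 ∨ w.1 = v.1 - 1)) ∨
    (w.1 = v.1 ∧ w.2 = v.2 + 1 - 2 * ((v.1 + v.2) % 2)) := by
  obtain ⟨a, b⟩ := v
  obtain ⟨c, d⟩ := w
  simp only [nF, Finset.mem_insert, Finset.mem_singleton, Prod.mk.injEq]
  tauto

lemma adj_iff {v w : ℤ × ℤ} : hexGrid.Adj v w ↔ w ∈ nF v := by
  rw [mem_nF]
  obtain ⟨a, b⟩ := v
  obtain ⟨c, d⟩ := w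
  simp only [hexGrid, SimpleGraph.fromRel_adj, ne_eq, Prod.mk.injEq, Int.even_iff]
  omega

lemma nF_symm {v w : ℤ × ℤ} (h : w ∈ nF v) : v ∈ nF w := by
  rw [← adj_iff] at *
  exact h.symm

lemma mem_cF {v w : ℤ × ℤ} : w ∈ cF v ↔ w = v ∨ w ∈ nF v := by
  simp [cF]

lemma cF_symm {v w : ℤ × ℤ} (h : w ∈ cF v) : v ∈ cF w := by
  rw [mem_cF] at *
  rcases h with h | h
  · exact Or.inl h.symm
  · exact Or.inr (nF_symm h)

lemma neighborSet_eq (v : ℤ × ℤ) : hexGrid.neighborSet v = (nF v : Set (ℤ × ℤ)) := by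
  ext w
  simp [SimpleGraph.mem_neighborSet, adj_iff]

lemma closedNbhd_eq (v : ℤ × ℤ) : closedNbhd hexGrid v = (cF v : Set (ℤ × ℤ)) := by
  simp [closedNbhd, cF, neighborSet_eq]

lemma self_notMem_nF (v : ℤ × ℤ) : v ∉ nF v := by
  rw [mem_nF]; omega

lemma card_nF (v : ℤ × ℤ) : (nF v).card = 3 := by
  unfold nF
  rw [Finset.card_eq_three]
  refine ⟨_, _, _, ?_, ?_, ?_, rfl⟩ <;> simp only [ne_eq, Prod.mk.injEq] <;> omega

lemma card_cF (v : ℤ × ℤ) : (cF v).card = 4 := by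
  unfold cF
  rw [Finset.card_insert_of_notMem (self_notMem_nF v), card_nF]

/-- Distance formula. -/
def f (v : ℤ × ℤ) : ℤ := max (|v.1| + |v.2|) |2 * v.2 - (v.1 + v.2) % 2|

lemma f_lip {v w : ℤ × ℤ} (h : hexGrid.Adj v w) : f w ≤ f v + 1 := by
  rw [adj_iff, mem_nF] at h
  unfold f
  grind

lemma f_le_iff (a b n : ℤ) : f (a, b) ≤ n ↔ (a + b ≤ n ∧ a - b ≤ n ∧ -a + b ≤ n ∧ -a - b ≤ n) ∧
    2 * b - (a + b) % 2 ≤ n ∧ (a + b) % 2 - 2 * b ≤ n := by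
  unfold f
  rw [max_le_iff, abs_le]
  have h : |a| + |b| ≤ n ↔ (a + b ≤ n ∧ a - b ≤ n ∧ -a + b ≤ n ∧ -a - b ≤ n) := by
    rcases abs_cases a with h1 | h1 <;> rcases abs_cases b with h2 | h2 <;> rw [h1.1, h2.1] <;> omega
  rw [h]
  simp only
  omega

lemma f_desc (v : ℤ × ℤ) (h : 0 < f v) : ∃ w, hexGrid.Adj v w ∧ f w = f v - 1 := by
  by_contra hc
  have key : ∀ w, w ∈ nF v → ¬ f w ≤ f v - 1 := by
    intro w hw hle
    have := f_lip (adj_iff.2 (nF_symm hw))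
    exact hc ⟨w, adj_iff.2 hw, by omega⟩
  simp only [mem_nF] at key
  have h1 := key (v.1 + 1, v.2) (by simp)
  have h2 := key (v.1 - 1, v.2) (by simp)
  have h3 := key (v.1, v.2 + 1 - 2 * ((v.1 + v.2) % 2)) (by simp)
  obtain ⟨a, b⟩ := v
  clear hc key
  generalize hn : f (a, b) = n at h h1 h2 h3
  have h4 : f (a, b) ≤ n := hn.le
  have h5 : ¬ f (a, b) ≤ n - 1 := by omega
  rw [f_le_iff] at h4 h5
  rw [f_le_iff] at h1 h2 h3
  clear hn
  simp only at *
  have hp : (a + b) % 2 = 0 ∨ (a + b) % 2 = 1 := by omega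
  rcases hp with hp | hp <;> rcases lt_trichotomy a 0 with ha | ha | ha <;>
    rcases lt_trichotomy b 0 with hb | hb | hb <;> rw [hp] at * <;> omega

lemma f_nonneg (v : ℤ × ℤ) : 0 ≤ f v := le_max_of_le_right (abs_nonneg _)

lemma f_eq_zero {v : ℤ × ℤ} (h : f v = 0) : v = (0, 0) := by
  obtain ⟨a, b⟩ := v
  have h1 : |a| + |b| ≤ 0 := h ▸ le_max_left _ _
  simp only [Prod.mk.injEq]
  grind

lemma exists_walk (n : ℕ) : ∀ v : ℤ × ℤ, f v = n → ∃ p : hexGrid.Walk v (0, 0), p.length = n := by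
  induction n with
  | zero =>
    intro v h
    obtain rfl := f_eq_zero (by simpa using h)
    exact ⟨SimpleGraph.Walk.nil, rfl⟩
  | succ n ih =>
    intro v h
    obtain ⟨w, hw, hf⟩ := f_desc v (by omega)
    obtain ⟨p, hp⟩ := ih w (by push_cast at h; omega)
    exact ⟨SimpleGraph.Walk.cons hw p, by simp [hp]⟩

lemma f_walk {v w : ℤ × ℤ} (p : hexGrid.Walk v w) : f v ≤ f w + p.length := by
  induction p with
  | nil => simp
  | cons h p ih =>
    have := f_lip h.symm
    rw [SimpleGraph.Walk.length_cons]
    push_cast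
    omega

lemma dist_eq (v : ℤ × ℤ) : (hexGrid.dist (0, 0) v : ℤ) = f v := by
  obtain ⟨p, hp⟩ := exists_walk (f v).toNat v (by have := f_nonneg v; omega)
  rw [SimpleGraph.dist_comm]
  have h1 := SimpleGraph.dist_le p
  obtain ⟨q, hq⟩ := p.reachable.exists_walk_length_eq_dist
  have h2 := f_walk q
  have h0 : f (0, 0) = 0 := by simp [f]
  have := f_nonneg v
  omega

/-- The ball as a finset. -/
noncomputable def B (r : ℕ) : Finset (ℤ × ℤ) :=
  (Finset.Icc (-(r : ℤ)) r ×ˢ Finset.Icc (-(r : ℤ)) r).filter (fun v => f v ≤ r)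

lemma mem_B {r : ℕ} {v : ℤ × ℤ} : v ∈ B r ↔ f v ≤ r := by
  simp only [B, Finset.mem_filter, Finset.mem_product, Finset.mem_Icc, and_iff_right_iff_imp]
  intro h
  have h1 : |v.1| + |v.2| ≤ r := (le_max_left _ _).trans h
  grind

lemma ballSet_eq (r : ℕ) : ballSet hexGrid ((0 : ℤ), (0 : ℤ)) r = (B r : Set (ℤ × ℤ)) := by
  ext v
  simp only [ballSet, Set.mem_ofPred_eq, Finset.mem_coe, mem_B, ← dist_eq]
  norm_cast

lemma B_lower (k : ℕ) : k * k ≤ (B (2 * k)).card := by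
  have : (Finset.Ico (0 : ℤ) k ×ˢ Finset.Ico (0 : ℤ) k) ⊆ B (2 * k) := by
    intro v hv
    simp only [Finset.mem_product, Finset.mem_Ico] at hv
    rw [mem_B]
    unfold f
    push_cast
    refine max_le ?_ ?_
    · grind
    · rw [abs_le]
      omega
  simpa using Finset.card_le_card this

lemma B_mono : Monotone B := by
  intro r s h v hv
  rw [mem_B] at *
  omega

lemma B_step (n : ℕ) : (B (n + 1)).card ≤ (B n).card + 6 * (2 * n + 3) := by
  let m : ℤ := n + 1
  let I := Finset.Icc (-m) m
  have hI : I.card = 2 * n + 3 := by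
    simp only [I, m, Int.card_Icc]
    omega
  have hsub : B (n + 1) ⊆ B n ∪ ((I.image (fun b : ℤ => (m - |b|, b)) ∪
      I.image (fun b : ℤ => (-(m - |b|), b))) ∪
      I ×ˢ ({m / 2, (m + 1) / 2, -(m / 2), (1 - m) / 2} : Finset ℤ)) := by
    intro v hv
    by_cases hn : v ∈ B n
    · exact Finset.mem_union_left _ hn
    apply Finset.mem_union_right
    rw [mem_B] at hv hn
    obtain ⟨a, b⟩ := v
    have hf : f (a, b) = m := by push_cast at hv; omega
    have h1 : |a| + |b| ≤ m := hf ▸ le_max_left _ _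
    simp only [I, Finset.mem_union, Finset.mem_image, Finset.mem_product, Finset.mem_Icc,
      Finset.mem_insert, Finset.mem_singleton, Prod.mk.injEq]
    rcases max_choice (|a| + |b|) |2 * b - (a + b) % 2| with h | h
    · have h2 : |a| + |b| = m := by rw [← hf]; exact h.symm
      left
      rcases abs_cases a with h3 | h3
      · left
        exact ⟨b, by grind, by omega, rfl⟩
      · right
        exact ⟨b, by grind, by omega, rfl⟩
    · have h2 : |2 * b - (a + b) % 2| = m := by rw [← hf]; exact h.symm
      right
      refine ⟨by grind, ?_⟩
      rcases abs_cases (2 * b - (a + b) % 2) with h3 | h3 <;> omega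
  refine (Finset.card_le_card hsub).trans ?_
  refine (Finset.card_union_le _ _).trans ?_
  have h1 := Finset.card_union_le (I.image (fun b : ℤ => (m - |b|, b)) ∪
      I.image (fun b : ℤ => (-(m - |b|), b))) (I ×ˢ ({m / 2, (m + 1) / 2, -(m / 2), (1 - m) / 2} : Finset ℤ))
  have h2 := Finset.card_union_le (I.image (fun b : ℤ => (m - |b|, b)))
      (I.image (fun b : ℤ => (-(m - |b|), b)))
  have h3 := Finset.card_image_le (s := I) (f := fun b : ℤ => (m - |b|, b))
  have h4 := Finset.card_image_le (s := I) (f := fun b : ℤ => (-(m - |b|), b))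
  have h5 : ({m / 2, (m + 1) / 2, -(m / 2), (1 - m) / 2} : Finset ℤ).card ≤ 4 := Finset.card_le_four
  rw [Finset.card_product] at h1
  have h6 := Nat.mul_le_mul_left I.card h5
  omega

lemma B_pos (n : ℕ) : 0 < (B n).card := by
  apply Finset.card_pos.mpr
  exact ⟨(0, 0), by rw [mem_B]; simp [f]⟩

lemma B_quad (n : ℕ) : n * n ≤ 9 * (B n).card := by
  have h1 := B_lower (n / 2)
  have h2 : (B (2 * (n / 2))).card ≤ (B n).card := Finset.card_le_card (B_mono (by omega))
  rcases Nat.lt_or_ge n 2 with h | h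
  · have := B_pos n
    nlinarith
  · have h3 : n ≤ 3 * (n / 2) := by omega
    nlinarith [Nat.mul_le_mul h3 h3]

open Filter Topology

lemma ratio_up : Tendsto (fun n : ℕ => ((B (n + 1)).card : ℝ) / ((B n).card : ℝ)) atTop (𝓝 1) := by
  have h0 : Tendsto (fun n : ℕ => (1 : ℝ) + 270 * (1 / (n : ℝ))) atTop (𝓝 1) := by
    have := (tendsto_one_div_atTop_nhds_zero_nat (𝕜 := ℝ)).const_mul 270
    simpa using this.const_add 1
  refine tendsto_of_tendsto_of_tendsto_of_le_of_le' tendsto_const_nhds h0 ?_ ?_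
  · refine Eventually.of_forall fun n => ?_
    have h := B_pos n
    rw [one_le_div (by exact_mod_cast h)]
    exact_mod_cast Finset.card_le_card (B_mono (by omega))
  · filter_upwards [eventually_ge_atTop 1] with n hn
    have h := B_pos n
    have h1 : (0 : ℝ) < (B n).card := by exact_mod_cast h
    have hn' : (1 : ℝ) ≤ n := by exact_mod_cast hn
    rw [div_le_iff₀ h1]
    have h2 : ((B (n + 1)).card : ℝ) ≤ (B n).card + 6 * (2 * n + 3) := by exact_mod_cast B_step n
    have h3 : (n : ℝ) * n ≤ 9 * (B n).card := by exact_mod_cast B_quad n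
    have h4 : (30 : ℝ) * n ≤ 270 * (1 / n) * (B n).card := by
      have : 270 * (1 / (n : ℝ)) * (B n).card = 30 * (9 * (B n).card) / n := by ring
      rw [this, le_div_iff₀ (by linarith)]
      nlinarith
    linarith

lemma ratio_down : Tendsto (fun n : ℕ => ((B (n - 1)).card : ℝ) / ((B n).card : ℝ)) atTop (𝓝 1) := by
  rw [← tendsto_add_atTop_iff_nat 1]
  have := ratio_up.inv₀ one_ne_zero
  simpa using this

lemma cF_B {r : ℕ} {v w : ℤ × ℤ} (hv : v ∈ B r) (hw : w ∈ cF v) : w ∈ B (r + 1) := by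
  rw [mem_B] at *
  push_cast
  rcases mem_cF.1 hw with rfl | h
  · omega
  · have := f_lip (adj_iff.2 h)
    omega

open Classical in
lemma count_up {S : Set (ℤ × ℤ)} (hS : ∀ v, 3 ≤ (closedNbhd hexGrid v ∩ S).encard) (r : ℕ) :
    4 * ((B r).filter (· ∉ S)).card ≤ (B (r + 1)).card := by
  have hd : Set.PairwiseDisjoint (((B r).filter (· ∉ S) : Finset _) : Set (ℤ × ℤ)) cF := by
    intro d hd e he hne
    rw [Function.onFun, Finset.disjoint_left]
    intro w hw hw'
    simp only [Finset.coe_filter, Set.mem_ofPred_eq] at hd he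
    have h1 := hS w
    have h2 : closedNbhd hexGrid w ∩ S ⊆ (((cF w).erase d).erase e : Finset _) := by
      rw [closedNbhd_eq]
      rintro x ⟨hx, hxS⟩
      simp only [Finset.coe_erase, Set.mem_diff, Set.mem_singleton_iff]
      exact ⟨⟨hx, fun h => hd.2 (h ▸ hxS)⟩, fun h => he.2 (h ▸ hxS)⟩
    have h3 := h1.trans (Set.encard_le_encard h2)
    rw [Set.encard_coe_eq_coe_finsetCard, Finset.card_erase_of_mem, Finset.card_erase_of_mem,
      card_cF] at h3
    · norm_cast at h3
    · exact cF_symm hw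
    · exact Finset.mem_erase.2 ⟨hne.symm, cF_symm hw'⟩
  have h := Finset.card_biUnion hd
  rw [Finset.sum_congr rfl (fun v _ => card_cF v), Finset.sum_const, smul_eq_mul] at h
  rw [mul_comm, ← h]
  apply Finset.card_le_card
  intro w hw
  simp only [Finset.mem_biUnion, Finset.mem_filter] at hw
  obtain ⟨v, hv, hw⟩ := hw
  exact cF_B hv.1 hw

open Classical in
lemma ncard_eq (S : Set (ℤ × ℤ)) (r : ℕ) :
    ((S ∩ ballSet hexGrid ((0 : ℤ), (0 : ℤ)) r).ncard : ℝ) / (ballSet hexGrid ((0 : ℤ), (0 : ℤ)) r).ncard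
      = 1 - (((B r).filter (· ∉ S)).card : ℝ) / (B r).card := by
  have h1 : S ∩ ballSet hexGrid ((0 : ℤ), (0 : ℤ)) r = ((B r).filter (· ∈ S) : Finset _) := by
    rw [ballSet_eq]
    ext v
    simp [and_comm]
  rw [h1, ballSet_eq, Set.ncard_coe_finset, Set.ncard_coe_finset]
  have h2 := Finset.card_filter_add_card_filter_not (s := B r) (· ∈ S)
  have h3 : (0 : ℝ) < (B r).card := by exact_mod_cast B_pos r
  rw [eq_sub_iff_add_eq, ← add_div, div_eq_one_iff_eq h3.ne']
  exact_mod_cast h2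

lemma lower_aux {S : Set (ℤ × ℤ)} (hS : ∀ v, 3 ≤ (closedNbhd hexGrid v ∩ S).encard) (r : ℕ) :
    1 - (1 / 4 : ℝ) * (((B (r + 1)).card : ℝ) / (B r).card) ≤
    ((S ∩ ballSet hexGrid ((0 : ℤ), (0 : ℤ)) r).ncard : ℝ) / (ballSet hexGrid ((0 : ℤ), (0 : ℤ)) r).ncard := by
  classical
  rw [ncard_eq]
  have h3 : (0 : ℝ) < (B r).card := by exact_mod_cast B_pos r
  have h1 : (4 : ℝ) * ((B r).filter (· ∉ S)).card ≤ (B (r + 1)).card := by exact_mod_cast count_up hS r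
  rw [← mul_div_assoc]
  gcongr
  linarith

lemma tend_low : Tendsto (fun r : ℕ => 1 - (1 / 4 : ℝ) * (((B (r + 1)).card : ℝ) / (B r).card))
    atTop (𝓝 (3 / 4)) := by
  have := (ratio_up.const_mul (1 / 4)).const_sub 1
  convert this using 2
  norm_num

lemma tend_high : Tendsto (fun r : ℕ => 1 - (1 / 4 : ℝ) * (((B (r - 1)).card : ℝ) / (B r).card))
    atTop (𝓝 (3 / 4)) := by
  have := (ratio_down.const_mul (1 / 4)).const_sub 1
  convert this using 2
  norm_num

lemma lower {S : Set (ℤ × ℤ)} (hS : ∀ v, 3 ≤ (closedNbhd hexGrid v ∩ S).encard) :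
    (3 : ℝ) / 4 ≤ density hexGrid S ((0 : ℤ), (0 : ℤ)) := by
  unfold density
  rw [← tend_low.limsup_eq]
  refine limsup_le_limsup (Eventually.of_forall (lower_aux hS)) ?_ ?_
  · exact tend_low.isCoboundedUnder_le
  · refine isBoundedUnder_of ⟨1, fun r => ?_⟩
    apply div_le_one_of_le₀ _ (by positivity)
    have : (ballSet hexGrid ((0 : ℤ), (0 : ℤ)) r).Finite := by
      rw [ballSet_eq]; exact Finset.finite_toSet _
    exact_mod_cast Set.ncard_le_ncard Set.inter_subset_right this

/-- Complement of a perfect code. -/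
def S₀ : Set (ℤ × ℤ) := {v | (v.1 - 2 * v.2) % 4 ≠ 0}

lemma mem_S₀ {v : ℤ × ℤ} : v ∈ S₀ ↔ (v.1 - 2 * v.2) % 4 ≠ 0 := Iff.rfl

lemma exists_code (v : ℤ × ℤ) : ∃ d ∈ cF v, d ∉ S₀ := by
  simp only [mem_S₀, not_not, mem_cF, mem_nF]
  obtain ⟨a, b⟩ := v
  have h : (a - 2 * b) % 4 = 0 ∨ (a - 2 * b) % 4 = 1 ∨ (a - 2 * b) % 4 = 2 ∨
    (a - 2 * b) % 4 = 3 := by omega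
  rcases h with h | h | h | h
  · exact ⟨(a, b), by simp, h⟩
  · exact ⟨(a - 1, b), by simp, by simp only; omega⟩
  · exact ⟨(a, b + 1 - 2 * ((a + b) % 2)), by simp, by simp only; omega⟩
  · exact ⟨(a + 1, b), by simp, by simp only; omega⟩

lemma unique_code {v d e : ℤ × ℤ} (hd : d ∈ cF v) (he : e ∈ cF v) (hd' : d ∉ S₀) (he' : e ∉ S₀) :
    d = e := by
  simp only [mem_S₀, not_not, mem_cF, mem_nF, Prod.ext_iff] at *
  omega

open Classical in
lemma count_down (r : ℕ) : (B r).card ≤ 4 * ((B (r + 1)).filter (· ∉ S₀)).card := by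
  have hsub : B r ⊆ ((B (r + 1)).filter (· ∉ S₀)).biUnion cF := by
    intro v hv
    obtain ⟨d, hd, hdS⟩ := exists_code v
    simp only [Finset.mem_biUnion, Finset.mem_filter]
    exact ⟨d, ⟨cF_B hv hd, hdS⟩, cF_symm hd⟩
  rw [mul_comm]
  exact (Finset.card_le_card hsub).trans
    (Finset.card_biUnion_le_card_mul _ _ _ fun v _ => (card_cF v).le)

lemma upper_aux (r : ℕ) (hr : 1 ≤ r) :
    ((S₀ ∩ ballSet hexGrid ((0 : ℤ), (0 : ℤ)) r).ncard : ℝ) / (ballSet hexGrid ((0 : ℤ), (0 : ℤ)) r).ncard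
     ≤ 1 - (1 / 4 : ℝ) * (((B (r - 1)).card : ℝ) / (B r).card) := by
  classical
  rw [ncard_eq]
  have h3 : (0 : ℝ) < (B r).card := by exact_mod_cast B_pos r
  have h0 := count_down (r - 1)
  rw [Nat.sub_add_cancel hr] at h0
  have h1 : ((B (r - 1)).card : ℝ) ≤ 4 * ((B r).filter (· ∉ S₀)).card := by exact_mod_cast h0
  rw [← mul_div_assoc]
  gcongr
  linarith

lemma inter_card {u v : ℤ × ℤ} (h : u ≠ v) : (nF v ∩ nF u).card ≤ 1 := by
  rw [Finset.card_le_one]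
  intro x hx y hy
  simp only [Finset.mem_inter, mem_nF, Prod.ext_iff, ne_eq] at *
  grind

lemma no_triangle {u v x : ℤ × ℤ} (h1 : x ∈ nF v) (h2 : x ∈ nF u) : u ∉ nF v := by
  rw [mem_nF] at *
  omega

open Classical in
/-- Neighbors inside `S₀`. -/
noncomputable def sF (v : ℤ × ℤ) : Finset (ℤ × ℤ) := (nF v).filter (· ∈ S₀)

lemma sF_coe (v : ℤ × ℤ) : hexGrid.neighborSet v ∩ S₀ = (sF v : Set (ℤ × ℤ)) := by
  rw [neighborSet_eq]; ext; simp [sF]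

lemma sF_card_out {v : ℤ × ℤ} (h : v ∉ S₀) : (sF v).card = 3 := by
  classical
  rw [sF, Finset.filter_true_of_mem, card_nF]
  intro x hx
  by_contra hc
  have := unique_code (mem_cF.2 (Or.inr hx)) (mem_cF.2 (Or.inl rfl)) hc h
  exact self_notMem_nF v (this ▸ hx)

lemma sF_card_in {v : ℤ × ℤ} (h : v ∈ S₀) : 2 ≤ (sF v).card := by
  classical
  have h1 := Finset.card_filter_add_card_filter_not (s := nF v) (· ∈ S₀)
  have h2 : ((nF v).filter (· ∉ S₀)).card ≤ 1 := by
    rw [Finset.card_le_one]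
    intro x hx y hy
    simp only [Finset.mem_filter] at hx hy
    exact unique_code (mem_cF.2 (Or.inr hx.1)) (mem_cF.2 (Or.inr hy.1)) hx.2 hy.2
  rw [card_nF] at h1
  unfold sF
  omega

lemma sF_inter {u v : ℤ × ℤ} (h : u ≠ v) : (sF v ∩ sF u).card ≤ 1 := by
  classical
  refine (Finset.card_le_card ?_).trans (inter_card h)
  exact Finset.inter_subset_inter (Finset.filter_subset _ _) (Finset.filter_subset _ _)

lemma symm_card (u v : ℤ × ℤ) :
    (sF v ∆ sF u).card + 2 * (sF v ∩ sF u).card = (sF v).card + (sF u).card := by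
  have h1 := Finset.card_sdiff_add_card_inter (sF v) (sF u)
  have h2 := Finset.card_sdiff_add_card_inter (sF u) (sF v)
  have h3 : (sF v ∆ sF u).card = (sF v \ sF u).card + (sF u \ sF v).card := by
    rw [symmDiff_def, Finset.sup_eq_union, Finset.card_union_of_disjoint]
    exact disjoint_sdiff_sdiff
  rw [Finset.inter_comm] at h2
  omega

lemma isErrLD_S₀ : IsErrLD hexGrid S₀ := by
  classical
  simp only [IsErrLD, sF_coe]
  refine ⟨fun v => ?_, fun v hv u hu hne => ?_, fun v hv u hu => ?_, fun v hv u hu hne => ?_⟩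
  · obtain ⟨d, hd, hdS⟩ := exists_code v
    have h : (((cF v).erase d : Finset _) : Set (ℤ × ℤ)) ⊆ closedNbhd hexGrid v ∩ S₀ := by
      rw [closedNbhd_eq]
      intro x hx
      simp only [Finset.mem_coe, Finset.mem_erase] at hx
      refine ⟨hx.2, ?_⟩
      by_contra hc
      exact hx.1 (unique_code hx.2 hd hc hdS)
    refine le_trans ?_ (Set.encard_le_encard h)
    rw [Set.encard_coe_eq_coe_finsetCard, Finset.card_erase_of_mem hd, card_cF]
    norm_num
  · have hc := symm_card u v
    have h1 := sF_card_in hv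
    have h2 := sF_card_in hu
    have h3 := sF_inter hne
    have e : ((sF v : Set (ℤ × ℤ)) ∆ (sF u : Set (ℤ × ℤ))) \ {v, u} =
        ((sF v ∆ sF u) \ {v, u} : Finset _) := by push_cast; rfl
    rw [e, Set.encard_coe_eq_coe_finsetCard]
    have : 1 ≤ ((sF v ∆ sF u) \ {v, u}).card := by
      by_cases hi : (sF v ∩ sF u).card = 0
      · have h4 := Finset.le_card_sdiff {v, u} (sF v ∆ sF u)
        have h5 : ({v, u} : Finset (ℤ × ℤ)).card ≤ 2 := Finset.card_le_two
        omega
      · obtain ⟨x, hx⟩ := Finset.card_pos.1 (Nat.pos_of_ne_zero hi)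
        simp only [sF, Finset.mem_inter, Finset.mem_filter] at hx
        have h6 := no_triangle hx.1.1 hx.2.1
        have h7 := no_triangle hx.2.1 hx.1.1
        rw [Finset.sdiff_eq_self_of_disjoint]
        · omega
        · rw [Finset.disjoint_right]
          intro y hy
          have hv' := self_notMem_nF v
          have hu' := self_notMem_nF u
          simp only [Finset.mem_insert, Finset.mem_singleton] at hy
          rcases hy with rfl | rfl <;> simp [Finset.mem_symmDiff, sF, *]
    exact_mod_cast this
  · have hne : u ≠ v := fun h => hv (h ▸ hu)
    have hc := symm_card u v
    have h1 := sF_card_out hv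
    have h2 := sF_card_in hu
    have h3 := sF_inter hne
    have e : ((sF v : Set (ℤ × ℤ)) ∆ (sF u : Set (ℤ × ℤ))) \ {u} =
        ((sF v ∆ sF u) \ {u} : Finset _) := by push_cast; rfl
    rw [e, Set.encard_coe_eq_coe_finsetCard]
    have h4 := Finset.le_card_sdiff {u} (sF v ∆ sF u)
    rw [Finset.card_singleton] at h4
    have : 2 ≤ ((sF v ∆ sF u) \ {u}).card := by omega
    exact_mod_cast this
  · have hc := symm_card u v
    have h1 := sF_card_out hv
    have h2 := sF_card_out hu
    have h3 := sF_inter hne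
    have e : ((sF v : Set (ℤ × ℤ)) ∆ (sF u : Set (ℤ × ℤ))) =
        ((sF v ∆ sF u) : Finset _) := by push_cast; rfl
    rw [e, Set.encard_coe_eq_coe_finsetCard]
    have : 3 ≤ (sF v ∆ sF u).card := by omega
    exact_mod_cast this

lemma density_S₀ : density hexGrid S₀ ((0 : ℤ), (0 : ℤ)) = 3 / 4 := by
  apply Tendsto.limsup_eq
  refine tendsto_of_tendsto_of_tendsto_of_le_of_le' tend_low tend_high ?_ ?_
  · exact Eventually.of_forall (lower_aux isErrLD_S₀.1)
  · filter_upwards [eventually_ge_atTop 1] with r hr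
    exact upper_aux r hr

end HexAux

theorem errLD_density_hex :
    (∀ S : Set (ℤ × ℤ), IsErrLD hexGrid S →
      (3 : ℝ) / 4 ≤ density hexGrid S ((0 : ℤ), (0 : ℤ))) ∧
    (∃ S : Set (ℤ × ℤ), IsErrLD hexGrid S ∧
      density hexGrid S ((0 : ℤ), (0 : ℤ)) = (3 : ℝ) / 4) :=
  ⟨fun _ hS => HexAux.lower hS.1, HexAux.S₀, HexAux.isErrLD_S₀, HexAux.density_S₀⟩
end

section
/- Every ERR:LD set of the infinite square grid SQ has density at least 3/5, and there exists an ERR:LD set of SQ whose density is at most 2/3. -/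
open scoped symmDiff

variable {V : Type*}

/-- The infinite square grid on `ℤ × ℤ`. -/
def squareGrid : SimpleGraph (ℤ × ℤ) :=
  SimpleGraph.fromRel (fun p q =>
    (p.2 = q.2 ∧ p.1 = q.1 + 1) ∨ (p.1 = q.1 ∧ p.2 = q.2 + 1))


theorem sq_adj (a b c d : ℤ) : squareGrid.Adj (a, b) (c, d) ↔
    (c = a + 1 ∧ d = b) ∨ (c = a - 1 ∧ d = b) ∨ (c = a ∧ d = b + 1) ∨ (c = a ∧ d = b - 1) := by
  simp only [squareGrid, SimpleGraph.fromRel_adj, ne_eq, Prod.mk.injEq]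
  omega

theorem sq_walk_lower {u v : ℤ × ℤ} (p : squareGrid.Walk u v) :
    v.1.natAbs + v.2.natAbs ≤ u.1.natAbs + u.2.natAbs + p.length := by
  induction p with
  | nil => simp
  | @cons a b c h p ih =>
    obtain ⟨a1, a2⟩ := a
    obtain ⟨b1, b2⟩ := b
    rw [sq_adj] at h
    simp only [SimpleGraph.Walk.length_cons] at *
    omega

theorem sq_walk_upper (n : ℕ) : ∀ a b : ℤ, a.natAbs + b.natAbs = n →
    ∃ p : squareGrid.Walk (a, b) (0, 0), p.length = n := by
  induction n with
  | zero =>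
    intro a b h
    obtain rfl : a = 0 := by omega
    obtain rfl : b = 0 := by omega
    exact ⟨.nil, rfl⟩
  | succ n ih =>
    intro a b h
    have key : ∃ c d : ℤ, squareGrid.Adj (a, b) (c, d) ∧ c.natAbs + d.natAbs = n := by
      rcases lt_trichotomy a 0 with h1 | h1 | h1
      · exact ⟨a + 1, b, by rw [sq_adj]; omega, by omega⟩
      · rcases lt_or_ge b 0 with h2 | h2
        · exact ⟨a, b + 1, by rw [sq_adj]; omega, by omega⟩
        · exact ⟨a, b - 1, by rw [sq_adj]; omega, by omega⟩
      · exact ⟨a - 1, b, by rw [sq_adj]; omega, by omega⟩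
    obtain ⟨c, d, hadj, hcd⟩ := key
    obtain ⟨p, hp⟩ := ih c d hcd
    exact ⟨.cons hadj p, by simp [hp]⟩

theorem sq_dist (a b : ℤ) : squareGrid.dist (0, 0) (a, b) = a.natAbs + b.natAbs := by
  obtain ⟨p, hp⟩ := sq_walk_upper _ a b rfl
  apply le_antisymm
  · rw [← hp, SimpleGraph.dist_comm]
    exact SimpleGraph.dist_le p
  · have hr : squareGrid.Reachable (0, 0) (a, b) := ⟨p.reverse⟩
    obtain ⟨q, hq⟩ := hr.exists_walk_length_eq_dist
    have := sq_walk_lower q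
    simp at this
    omega

/-- The ball of radius `r` as a finset. -/
noncomputable def sqBall (r : ℕ) : Finset (ℤ × ℤ) :=
  (Finset.Icc (-(r : ℤ)) r).biUnion
    (fun x => (Finset.Icc (-((r : ℤ) - |x|)) ((r : ℤ) - |x|)).image (fun y => (x, y)))

theorem mem_sqBall (r : ℕ) (a b : ℤ) : (a, b) ∈ sqBall r ↔ a.natAbs + b.natAbs ≤ r := by
  simp only [sqBall, Finset.mem_biUnion, Finset.mem_image, Finset.mem_Icc, Prod.mk.injEq]
  constructor
  · rintro ⟨x, hx, y, h, rfl, rfl⟩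
    rw [Int.abs_eq_natAbs] at h
    omega
  · intro h
    refine ⟨a, by omega, b, ?_, rfl, rfl⟩
    rw [Int.abs_eq_natAbs]
    omega

theorem ballSet_eq (r : ℕ) : ballSet squareGrid ((0 : ℤ), (0 : ℤ)) r = ↑(sqBall r) := by
  ext ⟨a, b⟩
  simp only [ballSet, Set.mem_ofPred_eq, Finset.mem_coe, mem_sqBall, sq_dist]

theorem sum_aux (r : ℕ) :
    ∑ x ∈ Finset.Icc (-(r : ℤ)) r, (2 * ((r : ℤ) - |x|) + 1) = 2 * r ^ 2 + 2 * r + 1 := by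
  induction r with
  | zero => simp
  | succ r ih =>
    have h : Finset.Icc (-((r + 1 : ℕ) : ℤ)) ((r + 1 : ℕ) : ℤ)
        = insert (-((r : ℤ) + 1)) (insert ((r : ℤ) + 1) (Finset.Icc (-(r : ℤ)) r)) := by
      ext x
      simp only [Finset.mem_insert, Finset.mem_Icc]
      omega
    rw [h, Finset.sum_insert (by simp only [Finset.mem_insert, Finset.mem_Icc]; omega),
      Finset.sum_insert (by simp only [Finset.mem_Icc]; omega)]
    have h2 : ∑ x ∈ Finset.Icc (-(r : ℤ)) r, (2 * (((r + 1 : ℕ) : ℤ) - |x|) + 1)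
        = ∑ x ∈ Finset.Icc (-(r : ℤ)) r, ((2 * ((r : ℤ) - |x|) + 1) + 2) := by
      apply Finset.sum_congr rfl
      intros; push_cast; ring
    rw [h2, Finset.sum_add_distrib, ih, abs_neg, abs_of_nonneg (by positivity : (0 : ℤ) ≤ r + 1)]
    simp only [Finset.sum_const, Int.card_Icc, nsmul_eq_mul]
    have : ((((r : ℤ) + 1 - -(r : ℤ)).toNat : ℕ) : ℤ) = 2 * r + 1 := by omega
    rw [this]
    push_cast
    ring

theorem card_sqBall (r : ℕ) : (sqBall r).card = 2 * r ^ 2 + 2 * r + 1 := by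
  zify
  rw [← sum_aux, sqBall, Finset.card_biUnion]
  swap
  · intro x _ y _ hxy
    rw [Function.onFun, Finset.disjoint_left]
    intro p hp hq
    simp only [Finset.mem_image] at hp hq
    obtain ⟨_, _, rfl⟩ := hp
    obtain ⟨_, _, h⟩ := hq
    exact hxy (Prod.mk.inj h).1.symm
  push_cast
  apply Finset.sum_congr rfl
  intro x hx
  rw [Finset.mem_Icc] at hx
  have := abs_le.2 hx
  rw [Finset.card_image_of_injective _ (fun a b h => (Prod.mk.inj h).2), Int.card_Icc]
  omega

open Classical in
theorem ncard_inter (S : Set (ℤ × ℤ)) (r : ℕ) :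
    (S ∩ ballSet squareGrid ((0 : ℤ), (0 : ℤ)) r).ncard = ((sqBall r).filter (· ∈ S)).card := by
  rw [ballSet_eq, ← Set.ncard_coe_finset]
  congr 1
  ext x
  simp [and_comm]

/-- The five shifts giving a closed neighborhood. -/
def shifts : Finset (ℤ × ℤ) := {(0, 0), (1, 0), (-1, 0), (0, 1), (0, -1)}

open Classical in
theorem lower_local (S : Set (ℤ × ℤ)) (v : ℤ × ℤ)
    (h : 3 ≤ (closedNbhd squareGrid v ∩ S).encard) :
    3 ≤ (shifts.filter (fun d => v + d ∈ S)).card := by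
  have hsub : closedNbhd squareGrid v ∩ S ⊆
      ↑((shifts.filter (fun d => v + d ∈ S)).image (fun d => v + d)) := by
    rintro ⟨c, d⟩ ⟨h1, h2⟩
    obtain ⟨a, b⟩ := v
    simp only [closedNbhd, Set.mem_insert_iff, SimpleGraph.mem_neighborSet, sq_adj,
      Prod.mk.injEq] at h1
    simp only [Finset.coe_image, Set.mem_image, Finset.coe_filter, Set.mem_ofPred_eq]
    refine ⟨(c - a, d - b), ⟨?_, by simpa using h2⟩, by simp⟩
    simp only [shifts, Finset.mem_insert, Finset.mem_singleton, Prod.mk.injEq]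
    omega
  have h3 := h.trans (Set.encard_le_encard hsub)
  rw [Set.encard_coe_eq_coe_finsetCard] at h3
  exact (by exact_mod_cast h3 : 3 ≤ _).trans Finset.card_image_le

open Classical in
theorem lower_count (S : Set (ℤ × ℤ)) (h : IsErrLD squareGrid S) (r : ℕ) :
    3 * (sqBall r).card ≤ 5 * ((sqBall (r + 1)).filter (· ∈ S)).card := by
  calc 3 * (sqBall r).card = ∑ v ∈ sqBall r, 3 := by simp [mul_comm]
    _ ≤ ∑ v ∈ sqBall r, (shifts.filter (fun d => v + d ∈ S)).card :=
        Finset.sum_le_sum fun v _ => lower_local S v (h.1 v)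
    _ = ∑ d ∈ shifts, ((sqBall r).filter (fun v => v + d ∈ S)).card := by
        simp only [Finset.card_filter]
        exact Finset.sum_comm
    _ ≤ ∑ d ∈ shifts, ((sqBall (r + 1)).filter (· ∈ S)).card := by
        apply Finset.sum_le_sum
        intro d hd
        apply Finset.card_le_card_of_injOn (fun v => v + d)
        · rintro ⟨a, b⟩ hv
          obtain ⟨c, e⟩ := d
          simp only [shifts, Finset.mem_insert, Finset.mem_singleton, Prod.mk.injEq] at hd
          simp only [Finset.coe_filter, Set.mem_ofPred_eq, mem_sqBall, Prod.mk_add_mk] at hv ⊢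
          exact ⟨by omega, hv.2⟩
        · intro x _ y _ hxy
          exact add_right_cancel hxy
    _ = 5 * ((sqBall (r + 1)).filter (· ∈ S)).card := by
        rw [Finset.sum_const]
        rfl

/-- The periodic set of density 2/3. -/
def perS : Set (ℤ × ℤ) := {p | (p.1 + p.2) % 3 ≠ 0}

theorem mem_perS (a b : ℤ) : (a, b) ∈ perS ↔ (a + b) % 3 ≠ 0 := Iff.rfl

theorem three_le_s16 {s : Set (ℤ × ℤ)} (a b c : ℤ × ℤ) (ha : a ∈ s) (hb : b ∈ s) (hc : c ∈ s)
    (hab : a ≠ b) (hac : a ≠ c) (hbc : b ≠ c) : 3 ≤ s.encard := by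
  have h : ({a, b, c} : Set (ℤ × ℤ)) ⊆ s := by
    rintro x (rfl | rfl | rfl) <;> assumption
  rw [← Set.encard_eq_three.2 ⟨a, b, c, hab, hac, hbc, rfl⟩]
  exact Set.encard_le_encard h

theorem two_le_s16 {s : Set (ℤ × ℤ)} (a b : ℤ × ℤ) (ha : a ∈ s) (hb : b ∈ s)
    (hab : a ≠ b) : 2 ≤ s.encard := by
  have h : ({a, b} : Set (ℤ × ℤ)) ⊆ s := by
    rintro x (rfl | rfl) <;> assumption
  rw [← Set.encard_pair hab]
  exact Set.encard_le_encard h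

theorem perS_dom (v : ℤ × ℤ) : 3 ≤ (closedNbhd squareGrid v ∩ perS).encard := by
  obtain ⟨a, b⟩ := v
  have h : (a + b) % 3 = 0 ∨ (a + b) % 3 = 1 ∨ (a + b) % 3 = 2 := by omega
  rcases h with h | h | h
  · apply three_le_s16 (a + 1, b) (a, b + 1) (a - 1, b) <;>
      simp only [closedNbhd, Set.mem_inter_iff, Set.mem_insert_iff, SimpleGraph.mem_neighborSet,
        sq_adj, Prod.mk.injEq, mem_perS, ne_eq, true_and,
        and_true, true_or, or_true, and_self, or_self, not_true_eq_false, not_false_eq_true,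
        false_and, and_false, false_or, or_false] <;> omega
  · apply three_le_s16 (a, b) (a + 1, b) (a, b + 1) <;>
      simp only [closedNbhd, Set.mem_inter_iff, Set.mem_insert_iff, SimpleGraph.mem_neighborSet,
        sq_adj, Prod.mk.injEq, mem_perS, ne_eq, true_and,
        and_true, true_or, or_true, and_self, or_self, not_true_eq_false, not_false_eq_true,
        false_and, and_false, false_or, or_false] <;> omega
  · apply three_le_s16 (a, b) (a - 1, b) (a, b - 1) <;>
      simp only [closedNbhd, Set.mem_inter_iff, Set.mem_insert_iff, SimpleGraph.mem_neighborSet,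
        sq_adj, Prod.mk.injEq, mem_perS, ne_eq, true_and,
        and_true, true_or, or_true, and_self, or_self, not_true_eq_false, not_false_eq_true,
        false_and, and_false, false_or, or_false] <;> omega

theorem mem_sd (x y a b c d : ℤ) :
    (x, y) ∈ (squareGrid.neighborSet (a, b) ∩ perS) ∆ (squareGrid.neighborSet (c, d) ∩ perS) ↔
    (x + y) % 3 ≠ 0 ∧
    ((squareGrid.Adj (a, b) (x, y) ∧ ¬ squareGrid.Adj (c, d) (x, y)) ∨
     (squareGrid.Adj (c, d) (x, y) ∧ ¬ squareGrid.Adj (a, b) (x, y))) := by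
  simp only [Set.mem_symmDiff, Set.mem_inter_iff, SimpleGraph.mem_neighborSet, mem_perS]
  tauto

theorem perS_errLD : IsErrLD squareGrid perS := by
  refine ⟨perS_dom, ?_, ?_, ?_⟩
  · rintro ⟨a, b⟩ hv ⟨c, d⟩ hu huv
    rw [mem_perS] at hv hu
    rw [Set.one_le_encard_iff_nonempty]
    rw [ne_eq, Prod.mk.injEq] at huv
    have key : ∃ x y : ℤ, (x, y) ∈ ((squareGrid.neighborSet (a, b) ∩ perS) ∆
        (squareGrid.neighborSet (c, d) ∩ perS)) \ {(a, b), (c, d)} := by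
      simp only [Set.mem_sdiff, mem_sd, sq_adj, Set.mem_insert_iff, Set.mem_singleton_iff,
        Prod.mk.injEq]
      have h1 : (a + b) % 3 = 1 ∨ (a + b) % 3 = 2 := by omega
      rcases h1 with h1 | h1
      · by_cases h2 : c = a + 1 ∧ d = b
        · exact ⟨a, b + 1, by omega⟩
        by_cases h3 : c = a + 1 ∧ d = b + 1
        · exact ⟨a, b + 1, by omega⟩
        by_cases h4 : c = a + 1 ∧ d = b - 1
        · exact ⟨a, b + 1, by omega⟩
        by_cases h5 : c = a + 2 ∧ d = b
        · exact ⟨a, b + 1, by omega⟩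
        · exact ⟨a + 1, b, by omega⟩
      · by_cases h2 : c = a - 1 ∧ d = b
        · exact ⟨a, b - 1, by omega⟩
        by_cases h3 : c = a - 1 ∧ d = b + 1
        · exact ⟨a, b - 1, by omega⟩
        by_cases h4 : c = a - 1 ∧ d = b - 1
        · exact ⟨a, b - 1, by omega⟩
        by_cases h5 : c = a - 2 ∧ d = b
        · exact ⟨a, b - 1, by omega⟩
        · exact ⟨a - 1, b, by omega⟩
    obtain ⟨x, y, h⟩ := key
    exact ⟨_, h⟩
  · rintro ⟨a, b⟩ hv ⟨c, d⟩ hu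
    rw [mem_perS] at hv hu
    have h1 : (c + d) % 3 = 1 ∨ (c + d) % 3 = 2 := by omega
    have h2 : ((c = a + 1 ∧ d = b) ∨ (c = a ∧ d = b + 1)) ∨
      ((c = a - 1 ∧ d = b) ∨ (c = a ∧ d = b - 1)) ∨
      ¬ ((c = a + 1 ∧ d = b) ∨ (c = a ∧ d = b + 1) ∨
      (c = a - 1 ∧ d = b) ∨ (c = a ∧ d = b - 1)) := by tauto
    rcases h2 with h2 | h2 | h2
    · apply two_le_s16 (a - 1, b) (a, b - 1) <;>
      simp only [Set.mem_sdiff, mem_sd, sq_adj, Set.mem_singleton_iff, Prod.mk.injEq, ne_eq, true_and,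
        and_true, true_or, or_true, and_self, or_self, not_true_eq_false, not_false_eq_true,
        false_and, and_false, false_or, or_false] <;>
      omega
    · apply two_le_s16 (a + 1, b) (a, b + 1) <;>
      simp only [Set.mem_sdiff, mem_sd, sq_adj, Set.mem_singleton_iff, Prod.mk.injEq, ne_eq, true_and,
        and_true, true_or, or_true, and_self, or_self, not_true_eq_false, not_false_eq_true,
        false_and, and_false, false_or, or_false] <;>
      omega
    · rcases h1 with h1 | h1
      · apply two_le_s16 (a + 1, b) (a, b + 1) <;>
        simp only [Set.mem_sdiff, mem_sd, sq_adj, Set.mem_singleton_iff, Prod.mk.injEq, ne_eq, true_and,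
        and_true, true_or, or_true, and_self, or_self, not_true_eq_false, not_false_eq_true,
        false_and, and_false, false_or, or_false] <;>
        omega
      · apply two_le_s16 (a - 1, b) (a, b - 1) <;>
        simp only [Set.mem_sdiff, mem_sd, sq_adj, Set.mem_singleton_iff, Prod.mk.injEq, ne_eq, true_and,
        and_true, true_or, or_true, and_self, or_self, not_true_eq_false, not_false_eq_true,
        false_and, and_false, false_or, or_false] <;>
        omega
  · rintro ⟨a, b⟩ hv ⟨c, d⟩ hu huv
    rw [mem_perS] at hv hu
    rw [ne_eq, Prod.mk.injEq] at huv
    by_cases h1 : c = a + 1 ∧ d = b - 1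
    · apply three_le_s16 (a - 1, b) (a, b + 1) (c + 1, d) <;>
      simp only [mem_sd, sq_adj, Prod.mk.injEq, ne_eq, true_and,
        and_true, true_or, or_true, and_self, or_self, not_true_eq_false, not_false_eq_true,
        false_and, and_false, false_or, or_false] <;> omega
    by_cases h2 : c = a - 1 ∧ d = b + 1
    · apply three_le_s16 (a + 1, b) (a, b - 1) (c - 1, d) <;>
      simp only [mem_sd, sq_adj, Prod.mk.injEq, ne_eq, true_and,
        and_true, true_or, or_true, and_self, or_self, not_true_eq_false, not_false_eq_true,
        false_and, and_false, false_or, or_false] <;> omega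
    · apply three_le_s16 (a - 1, b) (a, b + 1) (a + 1, b) <;>
      simp only [mem_sd, sq_adj, Prod.mk.injEq, ne_eq, true_and,
        and_true, true_or, or_true, and_self, or_self, not_true_eq_false, not_false_eq_true,
        false_and, and_false, false_or, or_false] <;> omega

open Classical in
theorem upper_count (r : ℕ) :
    3 * ((sqBall r).filter (· ∈ perS)).card ≤ 2 * (sqBall (r + 1)).card := by
  have hsplit := Finset.card_filter_add_card_filter_not (s := sqBall (r + 1)) (· ∈ perS)
  have hmono : ((sqBall r).filter (· ∈ perS)).card ≤ ((sqBall (r + 1)).filter (· ∈ perS)).card := by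
    apply Finset.card_le_card
    rintro ⟨a, b⟩ h
    simp only [Finset.mem_filter, mem_sqBall] at h ⊢
    exact ⟨by omega, h.2⟩
  have hU : (sqBall r).filter (· ∈ perS) ⊆
      (sqBall r).filter (fun p => (p.1 + p.2) % 3 = 1) ∪
      (sqBall r).filter (fun p => (p.1 + p.2) % 3 = 2) := by
    rintro ⟨a, b⟩ h
    simp only [Finset.mem_filter, Finset.mem_union, mem_perS] at h ⊢
    have : (a + b) % 3 = 1 ∨ (a + b) % 3 = 2 := by omega
    tauto
  have h0 := (Finset.card_le_card hU).trans (Finset.card_union_le _ _)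
  have h1 : ((sqBall r).filter (fun p => (p.1 + p.2) % 3 = 1)).card ≤
      ((sqBall (r + 1)).filter (fun p => ¬ (p ∈ perS))).card := by
    apply Finset.card_le_card_of_injOn (fun v => v + (-1, 0))
    · rintro ⟨a, b⟩ hv
      simp only [Finset.coe_filter, Set.mem_ofPred_eq, mem_sqBall, Prod.mk_add_mk, mem_perS] at hv ⊢
      omega
    · intro x _ y _ hxy
      exact add_right_cancel hxy
  have h2 : ((sqBall r).filter (fun p => (p.1 + p.2) % 3 = 2)).card ≤
      ((sqBall (r + 1)).filter (fun p => ¬ (p ∈ perS))).card := by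
    apply Finset.card_le_card_of_injOn (fun v => v + (1, 0))
    · rintro ⟨a, b⟩ hv
      simp only [Finset.coe_filter, Set.mem_ofPred_eq, mem_sqBall, Prod.mk_add_mk, mem_perS] at hv ⊢
      omega
    · intro x _ y _ hxy
      exact add_right_cancel hxy
  omega

theorem ratio_bounds (S : Set (ℤ × ℤ)) (r : ℕ) :
    0 ≤ ((S ∩ ballSet squareGrid ((0 : ℤ), (0 : ℤ)) r).ncard : ℝ) /
      ((ballSet squareGrid ((0 : ℤ), (0 : ℤ)) r).ncard : ℝ) ∧
    ((S ∩ ballSet squareGrid ((0 : ℤ), (0 : ℤ)) r).ncard : ℝ) /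
      ((ballSet squareGrid ((0 : ℤ), (0 : ℤ)) r).ncard : ℝ) ≤ 1 := by
  refine ⟨by positivity, ?_⟩
  apply div_le_one_of_le₀ _ (by positivity)
  have : (ballSet squareGrid ((0 : ℤ), (0 : ℤ)) r).Finite := by
    rw [ballSet_eq]; exact Finset.finite_toSet _
  exact_mod_cast Set.ncard_le_ncard Set.inter_subset_right this

theorem lim_inv : Filter.Tendsto (fun r : ℕ => 4 / ((r : ℝ) + 1)) Filter.atTop (nhds 0) := by
  have := (tendsto_one_div_add_atTop_nhds_zero_nat (𝕜 := ℝ)).const_mul 4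
  simpa [div_eq_mul_inv] using this

theorem errLD_density_square :
    (∀ S : Set (ℤ × ℤ), IsErrLD squareGrid S →
      (3 : ℝ) / 5 ≤ density squareGrid S ((0 : ℤ), (0 : ℤ))) ∧
    (∃ S : Set (ℤ × ℤ), IsErrLD squareGrid S ∧
      density squareGrid S ((0 : ℤ), (0 : ℤ)) ≤ (2 : ℝ) / 3) := by
  classical
  constructor
  · intro S hS
    have hlim : Filter.Tendsto (fun r : ℕ => (3 : ℝ) / 5 - 4 / ((r : ℝ) + 1)) Filter.atTop
        (nhds (3 / 5)) := by
      simpa using lim_inv.const_sub (3 / 5)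
    rw [← hlim.limsup_eq, density]
    apply Filter.limsup_le_limsup _ hlim.isCoboundedUnder_le
      (Filter.isBoundedUnder_of ⟨1, fun r => (ratio_bounds S r).2⟩)
    · filter_upwards [Filter.eventually_ge_atTop 1] with r hr
      obtain ⟨n, rfl⟩ : ∃ n, r = n + 1 := ⟨r - 1, by omega⟩
      have h := lower_count S hS n
      rw [ncard_inter, ballSet_eq, Set.ncard_coe_finset, card_sqBall]
      rw [card_sqBall] at h
      generalize (Finset.filter (· ∈ S) (sqBall (n + 1))).card = m at h
      have h' : 3 * (2 * (n : ℝ) ^ 2 + 2 * n + 1) ≤ 5 * m := by exact_mod_cast h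
      push_cast
      rw [sub_le_iff_le_add, div_add_div _ _ (by positivity) (by positivity),
        div_le_div_iff₀ (by positivity) (by positivity)]
      have hn : (0 : ℝ) ≤ n := by positivity
      nlinarith [mul_le_mul_of_nonneg_right h' (by positivity : (0 : ℝ) ≤ n + 1 + 1),
        pow_nonneg hn 2, pow_nonneg hn 3]
  · refine ⟨perS, perS_errLD, ?_⟩
    have hlim : Filter.Tendsto (fun r : ℕ => (2 : ℝ) / 3 + 4 / ((r : ℝ) + 1)) Filter.atTop
        (nhds (2 / 3)) := by
      simpa using lim_inv.const_add (2 / 3)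
    rw [← hlim.limsup_eq, density]
    apply Filter.limsup_le_limsup _ _ hlim.isBoundedUnder_le
    · refine Filter.Eventually.of_forall fun n => ?_
      have h := upper_count n
      dsimp only
      rw [ncard_inter, ballSet_eq, Set.ncard_coe_finset, card_sqBall]
      rw [card_sqBall] at h
      generalize (Finset.filter (· ∈ perS) (sqBall n)).card = m at h
      have h' : 3 * (m : ℝ) ≤ 2 * (2 * ((n : ℝ) + 1) ^ 2 + 2 * (n + 1) + 1) := by exact_mod_cast h
      push_cast
      rw [div_add_div _ _ (by positivity) (by positivity),
        div_le_div_iff₀ (by positivity) (by positivity)]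
      have hn : (0 : ℝ) ≤ n := by positivity
      nlinarith [mul_le_mul_of_nonneg_right h' (by positivity : (0 : ℝ) ≤ n + 1),
        pow_nonneg hn 2, pow_nonneg hn 3]
    · exact (Filter.isBoundedUnder_of
        ⟨0, fun r => (ratio_bounds perS r).1⟩ : Filter.IsBoundedUnder (· ≥ ·) _ _).isCoboundedUnder_le
end

section
/- Every ERR:LD set of the infinite triangular grid TRI has density at least 3/7, and there exists an ERR:LD set of TRI whose density is at most 1/2. -/
open scoped symmDiff

variable {V : Type*}

/-- The infinite triangular grid on `ℤ × ℤ`. -/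
def triGrid : SimpleGraph (ℤ × ℤ) :=
  SimpleGraph.fromRel (fun p q =>
    (p.1 - q.1, p.2 - q.2) ∈ ({(1, 0), (0, 1), (1, 1)} : Set (ℤ × ℤ)))

open Filter Topology

/-- Coordinate description of adjacency. -/
theorem tri_adj (p q : ℤ × ℤ) : triGrid.Adj p q ↔
    (q.1 = p.1 + 1 ∧ q.2 = p.2) ∨ (q.1 = p.1 - 1 ∧ q.2 = p.2) ∨
    (q.1 = p.1 ∧ q.2 = p.2 + 1) ∨ (q.1 = p.1 ∧ q.2 = p.2 - 1) ∨
    (q.1 = p.1 + 1 ∧ q.2 = p.2 + 1) ∨ (q.1 = p.1 - 1 ∧ q.2 = p.2 - 1) := by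
  obtain ⟨a, b⟩ := p
  obtain ⟨c, d⟩ := q
  simp only [triGrid, SimpleGraph.fromRel_adj, Set.mem_insert_iff, Set.mem_singleton_iff,
    Prod.mk.injEq, ne_eq]
  omega

/-- The hexagon of radius `r`. -/
noncomputable def hex (r : ℕ) : Finset (ℤ × ℤ) :=
  (Finset.Icc (-(r : ℤ)) r ×ˢ Finset.Icc (-(r : ℤ)) r).filter
    (fun p => p.1 - p.2 ≤ r ∧ p.2 - p.1 ≤ r)

theorem mem_hex (r : ℕ) (p : ℤ × ℤ) : p ∈ hex r ↔
    -(r : ℤ) ≤ p.1 ∧ p.1 ≤ r ∧ -(r : ℤ) ≤ p.2 ∧ p.2 ≤ r ∧ p.1 - p.2 ≤ r ∧ p.2 - p.1 ≤ r := by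
  simp [hex, and_assoc]

theorem hex_walk (r : ℕ) : ∀ u ∈ hex r, ∃ p : triGrid.Walk u (0, 0), p.length ≤ r := by
  induction r with
  | zero =>
    rintro ⟨a, b⟩ hu
    rw [mem_hex] at hu
    obtain rfl : a = 0 := by simp at hu; omega
    obtain rfl : b = 0 := by simp at hu; omega
    exact ⟨SimpleGraph.Walk.nil, by simp⟩
  | succ n ih =>
    rintro ⟨a, b⟩ hu
    rw [mem_hex] at hu
    push_cast at hu
    have step : ∀ w : ℤ × ℤ, triGrid.Adj (a, b) w → w ∈ hex n →
        ∃ p : triGrid.Walk (a, b) (0, 0), p.length ≤ n + 1 := by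
      intro w hw hwn
      obtain ⟨p, hp⟩ := ih w hwn
      exact ⟨SimpleGraph.Walk.cons hw p, by simpa using hp⟩
    by_cases h0 : a = 0 ∧ b = 0
    · obtain ⟨rfl, rfl⟩ := h0
      exact ⟨SimpleGraph.Walk.nil, by simp⟩
    by_cases h1 : 0 < a ∧ 0 < b
    · refine step (a - 1, b - 1) ?_ ?_
      · rw [tri_adj]; simp
      · rw [mem_hex]; simp only; omega
    by_cases h2 : a < 0 ∧ b < 0
    · refine step (a + 1, b + 1) ?_ ?_
      · rw [tri_adj]; simp
      · rw [mem_hex]; simp only; omega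
    by_cases h3 : 0 < a
    · refine step (a - 1, b) ?_ ?_
      · rw [tri_adj]; simp
      · rw [mem_hex]; simp only; omega
    by_cases h4 : a < 0
    · refine step (a + 1, b) ?_ ?_
      · rw [tri_adj]; simp
      · rw [mem_hex]; simp only; omega
    by_cases h5 : 0 < b
    · refine step (a, b - 1) ?_ ?_
      · rw [tri_adj]; simp
      · rw [mem_hex]; simp only; omega
    · refine step (a, b + 1) ?_ ?_
      · rw [tri_adj]; simp
      · rw [mem_hex]; simp only; omega

theorem hex_adj (r : ℕ) (u v : ℤ × ℤ) (h : triGrid.Adj u v) (hu : u ∈ hex r) :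
    v ∈ hex (r + 1) := by
  rw [tri_adj] at h
  rw [mem_hex] at hu ⊢
  push_cast
  omega

theorem hex_mono (r : ℕ) (u : ℤ × ℤ) (hu : u ∈ hex r) : u ∈ hex (r + 1) := by
  rw [mem_hex] at hu ⊢
  push_cast
  omega

theorem walk_hex (u v : ℤ × ℤ) (p : triGrid.Walk u v) (hv : v = (0, 0)) :
    u ∈ hex p.length := by
  induction p with
  | nil => subst hv; simp [mem_hex]
  | cons h p ih => exact hex_adj _ _ _ h.symm (ih hv)

theorem tri_ball_eq (r : ℕ) : ballSet triGrid ((0 : ℤ), (0 : ℤ)) r = (hex r : Set (ℤ × ℤ)) := by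
  ext u
  simp only [ballSet, Set.mem_ofPred_eq, Finset.mem_coe]
  rw [SimpleGraph.dist_comm]
  constructor
  · intro h
    have hu : u ∈ hex (u.1.natAbs + u.2.natAbs) := by
      rw [mem_hex]; omega
    obtain ⟨q, -⟩ := hex_walk _ u hu
    obtain ⟨p, hp⟩ := SimpleGraph.Reachable.exists_walk_length_eq_dist ⟨q⟩
    have := walk_hex _ _ p rfl
    rw [mem_hex] at this ⊢
    omega
  · intro h
    obtain ⟨p, hp⟩ := hex_walk r u h
    exact (SimpleGraph.dist_le p).trans hp

theorem hex_card_ge (r : ℕ) : (r + 1) ^ 2 ≤ (hex r).card := by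
  have h : Finset.Icc (0 : ℤ) r ×ˢ Finset.Icc (0 : ℤ) r ⊆ hex r := by
    intro p hp
    simp only [Finset.mem_product, Finset.mem_Icc] at hp
    rw [mem_hex]
    omega
  have := Finset.card_le_card h
  rw [Finset.card_product, Int.card_Icc] at this
  have e : ((r : ℤ) + 1 - 0).toNat = r + 1 := by omega
  rw [e] at this
  nlinarith

theorem hex_card_succ (r : ℕ) : (hex (r + 1)).card ≤ (hex r).card + 6 * (2 * r + 3) := by
  classical
  set I := Finset.Icc (-((r : ℤ) + 1)) (r + 1) with hI
  have cI : I.card = 2 * r + 3 := by rw [hI, Int.card_Icc]; omega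
  have h : hex (r + 1) ⊆ hex r ∪ (Finset.range 6 ×ˢ I).image (fun p : ℕ × ℤ =>
      if p.1 = 0 then ((r : ℤ) + 1, p.2) else if p.1 = 1 then (-((r : ℤ) + 1), p.2)
      else if p.1 = 2 then (p.2, (r : ℤ) + 1) else if p.1 = 3 then (p.2, -((r : ℤ) + 1))
      else if p.1 = 4 then (p.2, p.2 + ((r : ℤ) + 1)) else (p.2, p.2 - ((r : ℤ) + 1))) := by
    rintro ⟨a, b⟩ hp
    rw [mem_hex] at hp
    push_cast at hp
    rw [Finset.mem_union, Finset.mem_image]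
    by_cases hin : (a, b) ∈ hex r
    · exact Or.inl hin
    right
    rw [mem_hex] at hin
    simp only at hin
    by_cases h0 : a = r + 1
    · exact ⟨(0, b), by simp [hI]; omega, by simp [h0]⟩
    by_cases h1 : a = -((r : ℤ) + 1)
    · exact ⟨(1, b), by simp [hI]; omega, by simp [h1]⟩
    by_cases h2 : b = r + 1
    · exact ⟨(2, a), by simp [hI]; omega, by simp [h2]⟩
    by_cases h3 : b = -((r : ℤ) + 1)
    · exact ⟨(3, a), by simp [hI]; omega, by simp [h3]⟩
    by_cases h4 : b = a + (r + 1)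
    · exact ⟨(4, a), by simp [hI]; omega, by simp [h4]⟩
    · exact ⟨(5, a), by simp [hI]; omega, by simp; omega⟩
  refine (Finset.card_le_card h).trans ((Finset.card_union_le _ _).trans ?_)
  gcongr
  refine Finset.card_image_le.trans ?_
  rw [Finset.card_product, cI, Finset.card_range]

/-- The closed neighborhood as a finset. -/
def nb (v : ℤ × ℤ) : Finset (ℤ × ℤ) :=
  {v, (v.1 + 1, v.2), (v.1 - 1, v.2), (v.1, v.2 + 1), (v.1, v.2 - 1), (v.1 + 1, v.2 + 1),
    (v.1 - 1, v.2 - 1)}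

theorem mem_nb (v u : ℤ × ℤ) : u ∈ nb v ↔ u ∈ closedNbhd triGrid v := by
  simp only [nb, closedNbhd, Finset.mem_insert, Finset.mem_singleton, Set.mem_insert_iff,
    SimpleGraph.mem_neighborSet, tri_adj, Prod.ext_iff]

theorem nb_card (v : ℤ × ℤ) : (nb v).card ≤ 7 := by
  unfold nb
  exact (Finset.card_insert_le _ _).trans (Nat.succ_le_succ Finset.card_le_six)

open Classical in
/-- The part of a set in the hexagon. -/
noncomputable def part (S : Set (ℤ × ℤ)) (r : ℕ) : Finset (ℤ × ℤ) := (hex r).filter (· ∈ S)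

theorem ratio_eq (S : Set (ℤ × ℤ)) (r : ℕ) :
    ((S ∩ ballSet triGrid ((0 : ℤ), (0 : ℤ)) r).ncard : ℝ) /
      ((ballSet triGrid ((0 : ℤ), (0 : ℤ)) r).ncard : ℝ) = (part S r).card / (hex r).card := by
  have : S ∩ (hex r : Set (ℤ × ℤ)) = (part S r : Set (ℤ × ℤ)) := by
    ext; simp [part, and_comm]
  rw [tri_ball_eq, this, Set.ncard_coe_finset, Set.ncard_coe_finset]

theorem double_count (S : Set (ℤ × ℤ)) (h : ∀ v, 3 ≤ (closedNbhd triGrid v ∩ S).encard) (r : ℕ) :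
    (hex r).card * 3 ≤ (part S (r + 1)).card * 7 := by
  classical
  refine Finset.card_mul_le_card_mul (fun v u => u ∈ nb v) ?_ ?_
  · intro v hv
    have e : closedNbhd triGrid v ∩ S ⊆
        ((part S (r + 1)).bipartiteAbove (fun v u => u ∈ nb v) v : Set (ℤ × ℤ)) := by
      rintro u ⟨hu, hS⟩
      simp only [Finset.bipartiteAbove, part, Finset.coe_filter, Finset.mem_filter,
        Set.mem_ofPred_eq]
      refine ⟨⟨?_, hS⟩, (mem_nb v u).2 hu⟩
      rcases hu with rfl | hu
      · exact hex_mono _ _ hv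
      · exact hex_adj _ _ _ hu hv
    have := (h v).trans (Set.encard_le_encard e)
    rw [Set.encard_coe_eq_coe_finsetCard] at this
    exact_mod_cast this
  · intro u hu
    refine (Finset.card_le_card ?_).trans (nb_card u)
    intro v hv
    simp only [Finset.bipartiteBelow, Finset.mem_filter] at hv
    have := hv.2
    simp only [nb, Finset.mem_insert, Finset.mem_singleton, Prod.ext_iff] at this ⊢
    omega

theorem ratio_le_one (S : Set (ℤ × ℤ)) (r : ℕ) :
    ((part S r).card : ℝ) / (hex r).card ≤ 1 := by
  classical
  refine div_le_one_of_le₀ ?_ (by positivity)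
  exact_mod_cast Finset.card_filter_le _ _

theorem tendsto_err (c : ℝ) (d : ℝ) :
    Tendsto (fun r : ℕ => c + d * (1 / ((r : ℝ) + 1))) atTop (𝓝 c) := by
  simpa using (tendsto_one_div_add_atTop_nhds_zero_nat (𝕜 := ℝ)).const_mul d |>.const_add c

theorem lower (S : Set (ℤ × ℤ)) (h : IsErrLD triGrid S) :
    (3 : ℝ) / 7 ≤ density triGrid S ((0 : ℤ), (0 : ℤ)) := by
  unfold density
  simp_rw [ratio_eq]
  rw [← (tendsto_err (3 / 7) (-12)).limsup_eq]
  refine limsup_le_limsup ?_ (tendsto_err (3 / 7) (-12)).isCoboundedUnder_le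
    ⟨1, by simpa using ⟨0, fun r _ => ratio_le_one S r⟩⟩
  filter_upwards [eventually_ge_atTop 1] with r hr
  obtain ⟨n, rfl⟩ : ∃ n, r = n + 1 := ⟨r - 1, by omega⟩
  have h1 : ((hex n).card * 3 : ℝ) ≤ (part S (n + 1)).card * 7 := by
    exact_mod_cast double_count S h.1 n
  have h2 : ((hex (n + 1)).card : ℝ) ≤ (hex n).card + 6 * (2 * n + 3) := by
    exact_mod_cast hex_card_succ n
  have h3 : ((n : ℝ) + 1 + 1) ^ 2 ≤ (hex (n + 1)).card := by
    exact_mod_cast hex_card_ge (n + 1)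
  have hn : (0 : ℝ) ≤ n := by positivity
  have hpos : (0 : ℝ) < (hex (n + 1)).card := lt_of_lt_of_le (by positivity) h3
  rw [le_div_iff₀ hpos]
  push_cast
  have h4 : ((n : ℝ) + 1 + 1) ≤ 1 / ((n : ℝ) + 1 + 1) * (hex (n + 1)).card := by
    rw [one_div, inv_mul_eq_div, le_div_iff₀ (by positivity)]
    nlinarith
  linarith

theorem upper (S : Set (ℤ × ℤ)) (h : ∀ a b, (a, b) ∈ S → (a + 1, b) ∉ S) :
    density triGrid S ((0 : ℤ), (0 : ℤ)) ≤ (1 : ℝ) / 2 := by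
  classical
  unfold density
  simp_rw [ratio_eq]
  rw [← (tendsto_err (1 / 2) 12).limsup_eq]
  refine limsup_le_limsup ?_ ?_ (tendsto_err (1 / 2) 12).isBoundedUnder_le
  · filter_upwards with n
    have h1 : ((part S n).card + (part S n).card : ℝ) ≤ (hex (n + 1)).card := by
      have e : part S n ∪ (part S n).image (fun p => (p.1 + 1, p.2)) ⊆ hex (n + 1) := by
        intro p hp
        simp only [Finset.mem_union, Finset.mem_image, part, Finset.mem_filter] at hp
        rcases hp with hp | ⟨q, hq, rfl⟩
        · exact hex_mono _ _ hp.1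
        · exact hex_adj _ q _ (by rw [tri_adj]; simp) hq.1
      have e2 : Disjoint (part S n) ((part S n).image (fun p => (p.1 + 1, p.2))) := by
        rw [Finset.disjoint_left]
        intro p hp hp'
        simp only [Finset.mem_image, part, Finset.mem_filter] at hp hp'
        obtain ⟨q, hq, rfl⟩ := hp'
        exact h _ _ hq.2 hp.2
      have := Finset.card_le_card e
      rw [Finset.card_union_of_disjoint e2, Finset.card_image_of_injective] at this
      · exact_mod_cast this
      · rintro ⟨a, b⟩ ⟨c, d⟩ hh
        simpa using hh
    have h2 : ((hex (n + 1)).card : ℝ) ≤ (hex n).card + 6 * (2 * n + 3) := by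
      exact_mod_cast hex_card_succ n
    have h3 : ((n : ℝ) + 1) ^ 2 ≤ (hex n).card := by
      exact_mod_cast hex_card_ge n
    have hn : (0 : ℝ) ≤ n := by positivity
    have hpos : (0 : ℝ) < (hex n).card := lt_of_lt_of_le (by positivity) h3
    rw [div_le_iff₀ hpos]
    have h4 : ((n : ℝ) + 1) ≤ 1 / ((n : ℝ) + 1) * (hex n).card := by
      rw [one_div, inv_mul_eq_div, le_div_iff₀ (by positivity)]
      nlinarith
    linarith
  · exact IsBoundedUnder.isCoboundedUnder_le
      ⟨0, by simpa using ⟨0, fun r _ => by positivity⟩⟩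

theorem enc1 {s : Set (ℤ × ℤ)} (x : ℤ × ℤ) (hx : x ∈ s) : 1 ≤ s.encard :=
  Set.one_le_encard_iff_nonempty.2 ⟨x, hx⟩

theorem enc2 {s : Set (ℤ × ℤ)} (x y : ℤ × ℤ) (hx : x ∈ s) (hy : y ∈ s) (hxy : x ≠ y) :
    2 ≤ s.encard := by
  rw [← Set.encard_pair hxy]
  exact Set.encard_le_encard (by rintro z (rfl | rfl) <;> assumption)

theorem enc3 {s : Set (ℤ × ℤ)} (x y z : ℤ × ℤ) (hx : x ∈ s) (hy : y ∈ s) (hz : z ∈ s)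
    (hxy : x ≠ y) (hxz : x ≠ z) (hyz : y ≠ z) : 3 ≤ s.encard := by
  have : ({x, y, z} : Set (ℤ × ℤ)).encard = 3 := by
    rw [Set.encard_eq_three]; exact ⟨x, y, z, hxy, hxz, hyz, rfl⟩
  rw [← this]
  exact Set.encard_le_encard (by rintro z (rfl | rfl | rfl) <;> assumption)

/-- The even columns. -/
def evenCols : Set (ℤ × ℤ) := {p | p.1 % 2 = 0}

set_option maxHeartbeats 4000000 in
theorem evenCols_errLD : IsErrLD triGrid evenCols := by
  refine ⟨?_, ?_, ?_, ?_⟩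
  · rintro ⟨a, b⟩
    by_cases h : a % 2 = 0
    · apply enc3 (a, b) (a, b + 1) (a, b - 1) <;>
        simp [closedNbhd, evenCols, tri_adj] <;> omega
    · apply enc3 (a + 1, b) (a - 1, b) (a + 1, b + 1) <;>
        simp [closedNbhd, evenCols, tri_adj] <;> omega
  · rintro ⟨a, b⟩ hv ⟨c, d⟩ hu hne
    simp only [evenCols, Set.mem_ofPred_eq, ne_eq, Prod.mk.injEq] at hv hu hne
    by_cases h : c = a ∧ b < d
    · apply enc1 (a, b - 1)
      simp [evenCols, tri_adj, Set.mem_symmDiff]; omega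
    · apply enc1 (a, b + 1)
      simp [evenCols, tri_adj, Set.mem_symmDiff]; omega
  · rintro ⟨a, b⟩ hv ⟨c, d⟩ hu
    simp only [evenCols, Set.mem_ofPred_eq] at hv hu
    by_cases h : c = a - 1
    · apply enc2 (a + 1, b) (a + 1, b + 1) <;>
        simp [evenCols, tri_adj, Set.mem_symmDiff] <;> omega
    · apply enc2 (a - 1, b) (a - 1, b - 1) <;>
        simp [evenCols, tri_adj, Set.mem_symmDiff] <;> omega
  · rintro ⟨a, b⟩ hv ⟨c, d⟩ hu hne
    simp only [evenCols, Set.mem_ofPred_eq, ne_eq, Prod.mk.injEq] at hv hu hne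
    rcases lt_trichotomy a c with h | h | h
    · apply enc3 (a - 1, b) (a - 1, b - 1) (c + 1, d) <;>
        simp [evenCols, tri_adj, Set.mem_symmDiff] <;> omega
    · by_cases h' : b < d
      · apply enc3 (a + 1, b) (a - 1, b - 1) (a + 1, d + 1) <;>
          simp [evenCols, tri_adj, Set.mem_symmDiff] <;> omega
      · apply enc3 (a + 1, d) (a - 1, d - 1) (a + 1, b + 1) <;>
          simp [evenCols, tri_adj, Set.mem_symmDiff] <;> omega
    · apply enc3 (c - 1, d) (c - 1, d - 1) (a + 1, b) <;>
        simp [evenCols, tri_adj, Set.mem_symmDiff] <;> omega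

theorem errLD_density_tri :
    (∀ S : Set (ℤ × ℤ), IsErrLD triGrid S →
      (3 : ℝ) / 7 ≤ density triGrid S ((0 : ℤ), (0 : ℤ))) ∧
    (∃ S : Set (ℤ × ℤ), IsErrLD triGrid S ∧
      density triGrid S ((0 : ℤ), (0 : ℤ)) ≤ (1 : ℝ) / 2) := by
  refine ⟨lower, evenCols, evenCols_errLD, upper _ ?_⟩
  intro a b h h'
  simp only [evenCols, Set.mem_ofPred_eq] at h h'
  omega
end

section
/- Every ERR:LD set of the infinite king grid K has density at least 1/3, and there exists an ERR:LD set of K whose density is at most 7/16. -/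
open scoped symmDiff

variable {V : Type*}

/-- The infinite king grid on `ℤ × ℤ`. -/
def kingGrid : SimpleGraph (ℤ × ℤ) :=
  SimpleGraph.fromRel (fun p q => max |p.1 - q.1| |p.2 - q.2| = 1)

namespace KingAux

/-! ### Adjacency and balls in the king grid -/

lemma adj_iff (p q : ℤ × ℤ) :
    kingGrid.Adj p q ↔ p ≠ q ∧ |p.1 - q.1| ≤ 1 ∧ |p.2 - q.2| ≤ 1 := by
  obtain ⟨a, b⟩ := p
  obtain ⟨c, d⟩ := q
  simp only [kingGrid, SimpleGraph.fromRel_adj, ne_eq, Prod.mk.injEq]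
  have e1 : |c - a| = |a - c| := abs_sub_comm _ _
  have e2 : |d - b| = |b - d| := abs_sub_comm _ _
  rw [e1, e2, or_self]
  constructor
  · rintro ⟨h, hm⟩
    exact ⟨h, hm ▸ le_max_left _ _, hm ▸ le_max_right _ _⟩
  · rintro ⟨h, h1, h2⟩
    refine ⟨h, le_antisymm (max_le h1 h2) ?_⟩
    by_contra hc
    push Not at hc
    rw [max_lt_iff] at hc
    have := abs_lt.1 hc.1
    have := abs_lt.1 hc.2
    omega

lemma walk_le {p q : ℤ × ℤ} (w : kingGrid.Walk p q) :
    |p.1 - q.1| ≤ w.length ∧ |p.2 - q.2| ≤ w.length := by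
  induction w with
  | nil => simp
  | cons h w ih =>
    rw [adj_iff] at h
    simp only [SimpleGraph.Walk.length_cons, Nat.cast_add, Nat.cast_one, abs_le] at *
    omega

lemma exists_walk (n : ℕ) : ∀ q : ℤ × ℤ, |q.1| ≤ n → |q.2| ≤ n →
    ∃ w : kingGrid.Walk ((0 : ℤ), (0 : ℤ)) q, w.length ≤ n := by
  induction n with
  | zero =>
    rintro ⟨a, b⟩ h1 h2
    simp only [abs_le] at h1 h2
    obtain rfl : a = 0 := by omega
    obtain rfl : b = 0 := by omega
    exact ⟨.nil, le_rfl⟩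
  | succ n ih =>
    rintro ⟨a, b⟩ h1 h2
    simp only [abs_le] at h1 h2
    push_cast at h1 h2
    let ac : ℤ := max (-n) (min n a)
    let bc : ℤ := max (-n) (min n b)
    obtain ⟨w, hw⟩ := ih (ac, bc) (by simp only [abs_le, ac]; omega)
      (by simp only [abs_le, bc]; omega)
    by_cases hq : (ac, bc) = (a, b)
    · rw [hq] at w
      obtain ⟨w, hw⟩ := ih (ac, bc) (by simp only [abs_le, ac]; omega)
        (by simp only [abs_le, bc]; omega)
      exact ⟨w.copy rfl hq, by rw [SimpleGraph.Walk.length_copy]; omega⟩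
    · have hadj : kingGrid.Adj (ac, bc) (a, b) := by
        rw [adj_iff]
        refine ⟨hq, ?_, ?_⟩ <;> simp only [abs_le, ac, bc] <;> omega
      refine ⟨w.append hadj.toWalk, ?_⟩
      rw [SimpleGraph.Walk.length_append]
      simp
      omega

/-- The square box of radius `r`. -/
noncomputable def box (r : ℕ) : Finset (ℤ × ℤ) := Finset.Icc (-(r : ℤ)) r ×ˢ Finset.Icc (-(r : ℤ)) r

lemma mem_box {r : ℕ} {p : ℤ × ℤ} :
    p ∈ box r ↔ (-(r : ℤ) ≤ p.1 ∧ p.1 ≤ r) ∧ (-(r : ℤ) ≤ p.2 ∧ p.2 ≤ r) := by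
  simp [box]

lemma card_box (r : ℕ) : (box r).card = (2 * r + 1) ^ 2 := by
  simp only [box, Finset.card_product, Int.card_Icc]
  have : ((r : ℤ) + 1 - -(r : ℤ)).toNat = 2 * r + 1 := by omega
  rw [this, sq]

lemma ball_eq (r : ℕ) : ballSet kingGrid ((0 : ℤ), (0 : ℤ)) r = ↑(box r) := by
  ext q
  rw [Finset.mem_coe, mem_box, ← abs_le, ← abs_le]
  simp only [ballSet, Set.mem_ofPred_eq]
  constructor
  · intro h
    obtain ⟨w₀, -⟩ := exists_walk (max q.1.natAbs q.2.natAbs) q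
      (by rw [Int.abs_eq_natAbs]; exact_mod_cast le_max_left _ _)
      (by rw [Int.abs_eq_natAbs]; exact_mod_cast le_max_right _ _)
    obtain ⟨w, hw⟩ := (SimpleGraph.Walk.reachable w₀).exists_walk_length_eq_dist
    have := walk_le w
    rw [hw] at this
    simp only [zero_sub, abs_neg] at this
    have hh : (kingGrid.dist ((0 : ℤ), (0 : ℤ)) q : ℤ) ≤ r := by exact_mod_cast h
    exact ⟨this.1.trans hh, this.2.trans hh⟩
  · rintro ⟨h1, h2⟩
    obtain ⟨w, hw⟩ := exists_walk r q h1 h2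
    exact (SimpleGraph.dist_le w).trans hw

open Classical in
/-- The part of `S` inside the box. -/
noncomputable def cnt (S : Set (ℤ × ℤ)) (r : ℕ) : ℕ := ((box r).filter (· ∈ S)).card

lemma density_eq (S : Set (ℤ × ℤ)) : density kingGrid S ((0 : ℤ), (0 : ℤ)) =
    Filter.limsup (fun r : ℕ => (cnt S r : ℝ) / (2 * (r : ℝ) + 1) ^ 2) Filter.atTop := by
  classical
  unfold density
  congr 1
  funext r
  rw [ball_eq, Set.ncard_coe_finset, card_box]
  have : S ∩ ↑(box r) = ↑((box r).filter (· ∈ S)) := by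
    ext q; simp [and_comm]
  rw [this, Set.ncard_coe_finset]
  simp only [cnt]
  push_cast
  congr

lemma ratio_nonneg (S : Set (ℤ × ℤ)) (r : ℕ) :
    0 ≤ (cnt S r : ℝ) / (2 * (r : ℝ) + 1) ^ 2 := by positivity

lemma ratio_le_one (S : Set (ℤ × ℤ)) (r : ℕ) :
    (cnt S r : ℝ) / (2 * (r : ℝ) + 1) ^ 2 ≤ 1 := by
  classical
  rw [div_le_one (by positivity)]
  have h : cnt S r ≤ (2 * r + 1) ^ 2 := by
    rw [← card_box]
    exact Finset.card_filter_le _ _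
  exact_mod_cast h

/-! ### Lower bound -/

lemma lower_count (S : Set (ℤ × ℤ)) (hS : ∀ v, 3 ≤ (closedNbhd kingGrid v ∩ S).encard) (r : ℕ) :
    (2 * r + 1) ^ 2 ≤ 3 * cnt S (r + 1) := by
  classical
  have h := Finset.card_mul_le_card_mul (s := box r) (t := (box (r + 1)).filter (· ∈ S))
    (fun v s => s ∈ closedNbhd kingGrid v) (m := 3) (n := 9) ?_ ?_
  · rw [card_box] at h
    unfold cnt
    have e : (Finset.filter (· ∈ S) (box (r + 1))).card =
      (@Finset.filter _ (· ∈ S) (fun a => Classical.propDecidable _) (box (r + 1))).card := by congr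
    omega
  · intro v hv
    have := hS v
    have hsub : closedNbhd kingGrid v ∩ S ⊆ ↑(Finset.bipartiteAbove
      (fun v s => s ∈ closedNbhd kingGrid v) ((box (r + 1)).filter (· ∈ S)) v) := by
      rintro s ⟨hs, hsS⟩
      simp only [Finset.coe_bipartiteAbove, Finset.mem_filter, Set.mem_ofPred_eq]
      refine ⟨⟨?_, hsS⟩, hs⟩
      rw [mem_box] at hv ⊢
      simp only [closedNbhd, Set.mem_insert_iff, SimpleGraph.mem_neighborSet, adj_iff, abs_le] at hs
      rcases hs with rfl | hs
      · push_cast; omega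
      · push_cast; omega
    have h2 := this.trans (Set.encard_le_encard hsub)
    rw [Set.encard_coe_eq_coe_finsetCard] at h2
    exact_mod_cast h2
  · intro s hs
    have hsub : Finset.bipartiteBelow (fun v s => s ∈ closedNbhd kingGrid v) (box r) s ⊆
        Finset.Icc (s.1 - 1) (s.1 + 1) ×ˢ Finset.Icc (s.2 - 1) (s.2 + 1) := by
      intro v hv
      rw [Finset.mem_bipartiteBelow] at hv
      have hv := hv.2
      simp only [closedNbhd, Set.mem_insert_iff, SimpleGraph.mem_neighborSet, adj_iff, abs_le] at hv
      simp only [Finset.mem_product, Finset.mem_Icc]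
      rcases hv with rfl | hv <;> omega
    refine (Finset.card_le_card hsub).trans ?_
    rw [Finset.card_product, Int.card_Icc, Int.card_Icc]
    have h1 : (s.1 + 1 + 1 - (s.1 - 1)).toNat = 3 := by omega
    have h2 : (s.2 + 1 + 1 - (s.2 - 1)).toNat = 3 := by omega
    rw [h1, h2]

lemma tendsto_frac (a c : ℝ) : Filter.Tendsto
    (fun r : ℕ => c * ((2 * (r : ℝ) + a) / (2 * (r : ℝ) + 1)) ^ 2) Filter.atTop (nhds c) := by
  have h0 : Filter.Tendsto (fun r : ℕ => 2 * (r : ℝ) + 1) Filter.atTop Filter.atTop :=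
    Filter.tendsto_atTop_add_const_right _ _
      (tendsto_natCast_atTop_atTop.const_mul_atTop (by norm_num))
  have h1 : Filter.Tendsto (fun r : ℕ => 1 + (a - 1) / (2 * (r : ℝ) + 1)) Filter.atTop
      (nhds (1 + 0)) := tendsto_const_nhds.add (h0.const_div_atTop _)
  have h2 := (h1.pow 2).const_mul c
  simp only [add_zero, one_pow, mul_one] at h2
  refine h2.congr fun r => ?_
  have : 2 * (r : ℝ) + 1 ≠ 0 := by positivity
  congr 2
  field_simp
  ring

lemma lower (S : Set (ℤ × ℤ)) (hS : IsErrLD kingGrid S) :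
    (1 : ℝ) / 3 ≤ density kingGrid S ((0 : ℤ), (0 : ℤ)) := by
  rw [density_eq, ← (tendsto_frac (-1) (1 / 3)).limsup_eq]
  refine Filter.limsup_le_limsup ?_ (tendsto_frac (-1) (1 / 3)).isCoboundedUnder_le
    (Filter.isBoundedUnder_of ⟨1, ratio_le_one S⟩)
  filter_upwards [Filter.eventually_ge_atTop 1] with r hr
  obtain ⟨n, rfl⟩ : ∃ n, r = n + 1 := ⟨r - 1, by omega⟩
  have h : ((2 * (n : ℝ) + 1) ^ 2) ≤ 3 * cnt S (n + 1) := by exact_mod_cast lower_count S hS.1 n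
  rw [div_pow, mul_div_assoc']
  push_cast
  gcongr
  have e : (2 * ((n : ℝ) + 1) + -1) = 2 * n + 1 := by ring
  rw [e]
  linarith

/-! ### Upper bound: a periodic pattern with 7 points in every 4 by 4 block -/

/-- The seven residues. -/
def tile : Finset (ℤ × ℤ) := {(0, 0), (1, 0), (2, 0), (1, 1), (0, 2), (2, 2), (3, 3)}

/-- Membership test of the periodic pattern. -/
def patB (x y : ℤ) : Bool := decide ((x % 4, y % 4) ∈ tile)

/-- The periodic pattern. -/
def pat : Set (ℤ × ℤ) := {p | patB p.1 p.2 = true}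

lemma patB_red (x y i j : ℤ) : patB (x + i) (y + j) = patB (x % 4 + i) (y % 4 + j) := by
  simp [patB]

lemma pat_count (r : ℕ) : 16 * cnt pat r ≤ 7 * (2 * r + 7) ^ 2 := by
  classical
  let I : Finset ℤ := Finset.Icc ((-(r : ℤ)) / 4) ((r : ℤ) / 4)
  have h : cnt pat r ≤ ((I ×ˢ I) ×ˢ tile).card := by
    unfold cnt
    refine Finset.card_le_card_of_injOn
      (fun p => ((p.1 / 4, p.2 / 4), (p.1 % 4, p.2 % 4))) ?_ ?_
    · intro p hp
      simp only [Finset.coe_filter, Set.mem_ofPred_eq, mem_box] at hp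
      obtain ⟨hp, hpat⟩ := hp
      simp only [pat, patB, Set.mem_ofPred_eq, decide_eq_true_eq] at hpat
      simp only [Finset.mem_coe, Finset.mem_product, Finset.mem_Icc, I]
      exact ⟨by omega, hpat⟩
    · rintro ⟨a, b⟩ - ⟨c, d⟩ - h
      simp only [Prod.mk.injEq] at h ⊢
      omega
  have h7 : tile.card = 7 := by decide
  have hI : 4 * I.card ≤ 2 * r + 7 := by
    simp only [I, Int.card_Icc]
    omega
  rw [Finset.card_product, Finset.card_product, h7] at h
  nlinarith [Nat.mul_le_mul hI hI]

lemma upper_density : density kingGrid pat ((0 : ℤ), (0 : ℤ)) ≤ (7 : ℝ) / 16 := by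
  rw [density_eq, ← (tendsto_frac 7 (7 / 16)).limsup_eq]
  refine Filter.limsup_le_limsup ?_
    (Filter.IsBoundedUnder.isCoboundedUnder_le (Filter.isBoundedUnder_of ⟨0, ratio_nonneg pat⟩))
    (tendsto_frac 7 (7 / 16)).isBoundedUnder_le
  refine Filter.Eventually.of_forall fun r => ?_
  have h : 16 * (cnt pat r : ℝ) ≤ 7 * (2 * (r : ℝ) + 7) ^ 2 := by exact_mod_cast pat_count r
  simp only [div_pow, mul_div_assoc']
  gcongr
  linarith

/-- Adjacency to the vertex at offset `(i, j)`. -/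
def adjB (i j : ℤ) (o : ℤ × ℤ) : Bool :=
  decide (-1 ≤ o.1 - i ∧ o.1 - i ≤ 1 ∧ -1 ≤ o.2 - j ∧ o.2 - j ≤ 1 ∧ ¬ (o.1 = i ∧ o.2 = j))

/-- Offsets considered. -/
noncomputable def offs (n : ℤ) : Finset (ℤ × ℤ) := Finset.Icc (-n) n ×ˢ Finset.Icc (-n) n

/-- Neighbours of a vertex with residues `(x, y)` in the pattern. -/
noncomputable def nbs (x y : ℤ) : Finset (ℤ × ℤ) :=
  (offs 1).filter fun o => adjB 0 0 o && patB (x + o.1) (y + o.2)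

/-- Distinguishers of the vertices at offsets `(0, 0)` and `(i, j)`. -/
noncomputable def dif (x y i j : ℤ) : Finset (ℤ × ℤ) :=
  (offs 3).filter fun o => (adjB 0 0 o ^^ adjB i j o) && patB (x + o.1) (y + o.2)

set_option maxRecDepth 100000 in
lemma nbs_card : ∀ x ∈ Finset.Icc (0 : ℤ) 3, ∀ y ∈ Finset.Icc (0 : ℤ) 3,
    (if patB x y then 2 else 3) ≤ (nbs x y).card := by
  decide +kernel

set_option maxRecDepth 100000 in
lemma dif_card : ∀ x ∈ Finset.Icc (0 : ℤ) 3, ∀ y ∈ Finset.Icc (0 : ℤ) 3,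
    ∀ i ∈ Finset.Icc (-2 : ℤ) 2, ∀ j ∈ Finset.Icc (-2 : ℤ) 2, ¬ (i = 0 ∧ j = 0) →
    if patB x y then
      (patB (x + i) (y + j) = true → 1 ≤ (dif x y i j \ {(0, 0), (i, j)}).card)
    else if patB (x + i) (y + j) then 2 ≤ (dif x y i j \ {(i, j)}).card
    else 3 ≤ (dif x y i j).card := by
  decide +kernel

lemma adj_add (v o : ℤ × ℤ) (i j : ℤ) :
    kingGrid.Adj (v + (i, j)) (v + o) ↔ adjB i j o = true := by
  obtain ⟨a, b⟩ := v
  obtain ⟨c, d⟩ := o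
  simp only [adj_iff, adjB, abs_le, ne_eq, Prod.mk_add_mk, Prod.mk.injEq, decide_eq_true_eq]
  omega

lemma mem_pat_add (v o : ℤ × ℤ) :
    v + o ∈ pat ↔ patB (v.1 % 4 + o.1) (v.2 % 4 + o.2) = true := by
  rw [← patB_red]; rfl

lemma encard_ge {X : Set (ℤ × ℤ)} {k : ℕ} (v : ℤ × ℤ) (F : Finset (ℤ × ℤ)) (hk : k ≤ F.card)
    (h : ∀ o ∈ F, v + o ∈ X) : (k : ℕ∞) ≤ X.encard := by
  have hsub : (↑(F.map (addLeftEmbedding v)) : Set (ℤ × ℤ)) ⊆ X := by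
    intro p hp
    simp only [Finset.coe_map, Set.mem_image, Finset.mem_coe, addLeftEmbedding_apply] at hp
    obtain ⟨o, ho, rfl⟩ := hp
    exact h o ho
  have h2 := Set.encard_le_encard hsub
  rw [Set.encard_coe_eq_coe_finsetCard, Finset.card_map] at h2
  exact le_trans (by exact_mod_cast hk) h2

lemma nbs_mem {v o : ℤ × ℤ} (h : o ∈ nbs (v.1 % 4) (v.2 % 4)) :
    kingGrid.Adj v (v + o) ∧ v + o ∈ pat ∧ (-1 ≤ o.1 ∧ o.1 ≤ 1 ∧ -1 ≤ o.2 ∧ o.2 ≤ 1) := by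
  simp only [nbs, offs, Finset.mem_filter, Finset.mem_product, Finset.mem_Icc,
    Bool.and_eq_true] at h
  obtain ⟨h1, h2, h3⟩ := h
  refine ⟨?_, (mem_pat_add v o).2 h3, by omega⟩
  have := (adj_add v o 0 0).2 h2
  rwa [show ((0 : ℤ), (0 : ℤ)) = 0 from rfl, add_zero] at this

lemma dif_mem {v o : ℤ × ℤ} {i j : ℤ} (h : o ∈ dif (v.1 % 4) (v.2 % 4) i j) :
    v + o ∈ (kingGrid.neighborSet v ∩ pat) ∆ (kingGrid.neighborSet (v + (i, j)) ∩ pat) := by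
  simp only [dif, Finset.mem_filter, Bool.and_eq_true] at h
  obtain ⟨-, h2, h3⟩ := h
  have hp := (mem_pat_add v o).2 h3
  have e1 := adj_add v o 0 0
  rw [show ((0 : ℤ), (0 : ℤ)) = 0 from rfl, add_zero] at e1
  have e2 := adj_add v o i j
  simp only [Set.mem_symmDiff, Set.mem_inter_iff, SimpleGraph.mem_neighborSet, e1, e2, hp]
  revert h2
  cases adjB 0 0 o <;> cases adjB i j o <;> simp

lemma far_mem {v o : ℤ × ℤ} {i j : ℤ} (hij : ¬ ((-2 ≤ i ∧ i ≤ 2) ∧ (-2 ≤ j ∧ j ≤ 2)))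
    (h : o ∈ nbs (v.1 % 4) (v.2 % 4)) :
    v + o ∈ ((kingGrid.neighborSet v ∩ pat) ∆ (kingGrid.neighborSet (v + (i, j)) ∩ pat)) \
      {v, v + (i, j)} := by
  obtain ⟨h1, h2, h3⟩ := nbs_mem h
  refine ⟨Or.inl ⟨⟨h1, h2⟩, fun hc => ?_⟩, ?_⟩
  · have := (adj_add v o i j).1 hc.1
    simp only [adjB, decide_eq_true_eq] at this
    omega
  · simp only [Set.mem_insert_iff, Set.mem_singleton_iff, not_or]
    refine ⟨h1.ne', fun hc => ?_⟩
    have := add_left_cancel hc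
    subst this
    simp only at h3
    omega

lemma res_mem (a : ℤ) : a % 4 ∈ Finset.Icc (0 : ℤ) 3 := by
  rw [Finset.mem_Icc]; omega

lemma patB_mod (v : ℤ × ℤ) : patB (v.1 % 4) (v.2 % 4) = true ↔ v ∈ pat := by
  simp [patB, pat]

/-- The three separation conditions at a pair of distinct vertices. -/
lemma sep (v : ℤ × ℤ) (i j : ℤ) (hij : ¬ (i = 0 ∧ j = 0)) :
    let D := (kingGrid.neighborSet v ∩ pat) ∆ (kingGrid.neighborSet (v + (i, j)) ∩ pat)
    (v ∈ pat → v + (i, j) ∈ pat → ((1 : ℕ) : ℕ∞) ≤ (D \ {v, v + (i, j)}).encard) ∧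
    (v ∉ pat → v + (i, j) ∈ pat → ((2 : ℕ) : ℕ∞) ≤ (D \ {v + (i, j)}).encard) ∧
    (v ∉ pat → v + (i, j) ∉ pat → ((3 : ℕ) : ℕ∞) ≤ D.encard) := by
  intro D
  by_cases hfar : (-2 ≤ i ∧ i ≤ 2) ∧ (-2 ≤ j ∧ j ≤ 2)
  · have h := dif_card _ (res_mem v.1) _ (res_mem v.2) i (Finset.mem_Icc.2 hfar.1) j
      (Finset.mem_Icc.2 hfar.2) hij
    have e := mem_pat_add v (i, j)
    simp only at e
    refine ⟨fun hv hu => ?_, fun hv hu => ?_, fun hv hu => ?_⟩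
    · rw [if_pos ((patB_mod v).2 hv)] at h
      refine encard_ge v _ (h (e.1 hu)) fun o ho => ?_
      simp only [Finset.mem_sdiff, Finset.mem_insert, Finset.mem_singleton, not_or] at ho
      refine ⟨dif_mem ho.1, ?_⟩
      simp only [Set.mem_insert_iff, Set.mem_singleton_iff, not_or]
      exact ⟨fun hc => ho.2.1 (add_eq_left.1 hc), fun hc => ho.2.2 (add_left_cancel hc)⟩
    · rw [if_neg (mt (patB_mod v).1 hv), if_pos (e.1 hu)] at h
      refine encard_ge v _ h fun o ho => ?_
      simp only [Finset.mem_sdiff, Finset.mem_singleton] at ho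
      exact ⟨dif_mem ho.1, fun hc => ho.2 (add_left_cancel hc)⟩
    · rw [if_neg (mt (patB_mod v).1 hv), if_neg (mt e.2 hu)] at h
      exact encard_ge v _ h fun o ho => dif_mem ho
  · have h := nbs_card _ (res_mem v.1) _ (res_mem v.2)
    refine ⟨fun hv hu => ?_, fun hv hu => ?_, fun hv hu => ?_⟩
    · rw [if_pos ((patB_mod v).2 hv)] at h
      exact encard_ge v _ (by omega) fun o ho => far_mem hfar ho
    · rw [if_neg (mt (patB_mod v).1 hv)] at h
      refine encard_ge v _ (le_trans (by norm_num) h) fun o ho => ?_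
      have := far_mem hfar ho
      exact ⟨this.1, fun hc => this.2 (Or.inr hc)⟩
    · rw [if_neg (mt (patB_mod v).1 hv)] at h
      exact encard_ge v _ h fun o ho => (far_mem hfar ho).1

lemma exists_offset (v u : ℤ × ℤ) : ∃ i j : ℤ, u = v + (i, j) :=
  ⟨u.1 - v.1, u.2 - v.2, by ext <;> simp⟩

lemma offset_ne {v : ℤ × ℤ} {i j : ℤ} (h : v + (i, j) ≠ v) : ¬ (i = 0 ∧ j = 0) := by
  rintro ⟨rfl, rfl⟩
  exact h (add_zero v)

lemma pat_errLD : IsErrLD kingGrid pat := by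
  refine ⟨fun v => ?_, fun v hv u hu huv => ?_, fun v hv u hu => ?_, fun v hv u hu huv => ?_⟩
  · have h := nbs_card _ (res_mem v.1) _ (res_mem v.2)
    by_cases hv : v ∈ pat
    · rw [if_pos ((patB_mod v).2 hv)] at h
      have h0 : (0 : ℤ × ℤ) ∉ nbs (v.1 % 4) (v.2 % 4) := fun hc => by
        have := (nbs_mem hc).1
        rw [add_zero] at this
        exact this.ne rfl
      refine encard_ge (k := 3) v (insert 0 (nbs (v.1 % 4) (v.2 % 4))) ?_ fun o ho => ?_
      · rw [Finset.card_insert_of_notMem h0]; omega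
      · rcases Finset.mem_insert.1 ho with rfl | ho
        · rw [add_zero]; exact ⟨Set.mem_insert _ _, hv⟩
        · exact ⟨Set.mem_insert_of_mem _ (nbs_mem ho).1, (nbs_mem ho).2.1⟩
    · rw [if_neg (mt (patB_mod v).1 hv)] at h
      exact encard_ge (k := 3) v _ h fun o ho =>
        ⟨Set.mem_insert_of_mem _ (nbs_mem ho).1, (nbs_mem ho).2.1⟩
  · obtain ⟨i, j, rfl⟩ := exists_offset v u
    exact_mod_cast (sep v i j (offset_ne huv)).1 hv hu
  · obtain ⟨i, j, rfl⟩ := exists_offset v u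
    have hne : v + (i, j) ≠ v := fun hc => by rw [hc] at hu; exact hv hu
    exact (sep v i j (offset_ne hne)).2.1 hv hu
  · obtain ⟨i, j, rfl⟩ := exists_offset v u
    exact (sep v i j (offset_ne huv)).2.2 hv hu

end KingAux

theorem errLD_density_king :
    (∀ S : Set (ℤ × ℤ), IsErrLD kingGrid S →
      (1 : ℝ) / 3 ≤ density kingGrid S ((0 : ℤ), (0 : ℤ))) ∧
    (∃ S : Set (ℤ × ℤ), IsErrLD kingGrid S ∧
      density kingGrid S ((0 : ℤ), (0 : ℤ)) ≤ (7 : ℝ) / 16) := by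
  exact ⟨KingAux.lower, KingAux.pat, KingAux.pat_errLD, KingAux.upper_density⟩
end

section
/- The minimum cardinality of an ERR:LD set of the Petersen graph is 9; that is, the Petersen graph has an ERR:LD set of size 9, and every ERR:LD set of the Petersen graph has size at least 9. -/
open scoped symmDiff

variable {V : Type*}

/-- The Petersen graph as the Kneser graph `K(5,2)`: vertices are the 2-element
subsets of a 5-element set, adjacent iff disjoint. -/
def petersen : SimpleGraph {s : Finset (Fin 5) // s.card = 2} :=
  SimpleGraph.fromRel (fun s t => Disjoint s.val t.val)

abbrev PV : Type := {s : Finset (Fin 5) // s.card = 2}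

def nbF (v : PV) : Finset PV := Finset.univ.filter (fun u => v ≠ u ∧ Disjoint v.val u.val)

lemma nbF_coe (v : PV) : petersen.neighborSet v = (nbF v : Set PV) := by
  ext u
  simp only [SimpleGraph.mem_neighborSet, petersen, SimpleGraph.fromRel_adj, nbF,
    Finset.coe_filter, Finset.mem_univ, true_and, Set.mem_ofPred_eq]
  rw [disjoint_comm (a := u.val), or_self]

lemma cn_coe (v : PV) : closedNbhd petersen v = ((insert v (nbF v) : Finset PV) : Set PV) := by
  rw [closedNbhd, nbF_coe, Finset.coe_insert]

def x0 : PV := ⟨{0, 1}, rfl⟩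

def SF : Finset PV := Finset.univ.erase x0

lemma key : ∀ u v : PV, u ≠ v → ∃ w, u ∈ insert w (nbF w) ∧ v ∈ insert w (nbF w) ∧
    (((insert w (nbF w)).erase u).erase v).card ≤ 2 := by decide +kernel

lemma c1 : ∀ v : PV, 3 ≤ (insert v (nbF v) ∩ SF).card := by decide +kernel

lemma c2 : ∀ v ∈ SF, ∀ u ∈ SF, u ≠ v →
    1 ≤ (((nbF v ∩ SF) ∆ (nbF u ∩ SF)) \ {v, u}).card := by decide +kernel

lemma c3 : ∀ v ∉ SF, ∀ u ∈ SF,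
    2 ≤ (((nbF v ∩ SF) ∆ (nbF u ∩ SF)) \ {u}).card := by decide +kernel

lemma c4 : ∀ v ∉ SF, ∀ u ∉ SF, u ≠ v →
    3 ≤ ((nbF v ∩ SF) ∆ (nbF u ∩ SF)).card := by decide +kernel

lemma cardPV : Fintype.card PV = 10 := by decide +kernel

lemma cardSF : SF.card = 9 := by decide +kernel

theorem errLD_petersen :
    (∃ S : Set {s : Finset (Fin 5) // s.card = 2},
      IsErrLD petersen S ∧ S.ncard = 9) ∧
    (∀ S : Set {s : Finset (Fin 5) // s.card = 2},
      IsErrLD petersen S → 9 ≤ S.ncard) := by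
  refine ⟨⟨(SF : Set PV), ⟨?_, ?_, ?_, ?_⟩, ?_⟩, ?_⟩
  · intro v
    rw [cn_coe, ← Finset.coe_inter, Set.encard_coe_eq_coe_finsetCard]
    exact_mod_cast c1 v
  · intro v hv u hu huv
    have h := c2 v (by exact_mod_cast hv) u (by exact_mod_cast hu) huv
    have e : ((petersen.neighborSet v ∩ (SF : Set PV)) ∆ (petersen.neighborSet u ∩ (SF : Set PV)))
        \ {v, u} = ((((nbF v ∩ SF) ∆ (nbF u ∩ SF)) \ {v, u} : Finset PV) : Set PV) := by
      rw [nbF_coe, nbF_coe]; push_cast; rfl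
    rw [e, Set.encard_coe_eq_coe_finsetCard]
    exact_mod_cast h
  · intro v hv u hu
    have h := c3 v (by exact_mod_cast hv) u (by exact_mod_cast hu)
    have e : ((petersen.neighborSet v ∩ (SF : Set PV)) ∆ (petersen.neighborSet u ∩ (SF : Set PV)))
        \ {u} = ((((nbF v ∩ SF) ∆ (nbF u ∩ SF)) \ {u} : Finset PV) : Set PV) := by
      rw [nbF_coe, nbF_coe]; push_cast; rfl
    rw [e, Set.encard_coe_eq_coe_finsetCard]
    exact_mod_cast h
  · intro v hv u hu huv
    have h := c4 v (by exact_mod_cast hv) u (by exact_mod_cast hu) huv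
    have e : ((petersen.neighborSet v ∩ (SF : Set PV)) ∆ (petersen.neighborSet u ∩ (SF : Set PV)))
        = (((nbF v ∩ SF) ∆ (nbF u ∩ SF) : Finset PV) : Set PV) := by
      rw [nbF_coe, nbF_coe]; push_cast; rfl
    rw [e, Set.encard_coe_eq_coe_finsetCard]
    exact_mod_cast h
  · rw [Set.ncard_coe_finset, cardSF]
  · intro S hS
    by_contra hlt
    have hc := Set.ncard_add_ncard_compl S
    rw [Nat.card_eq_fintype_card, cardPV] at hc
    have h2 : 1 < Sᶜ.ncard := by omega
    obtain ⟨u, hu, v, hv, huv⟩ := (Set.one_lt_ncard_iff_nontrivial).1 h2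
    obtain ⟨w, -, -, hw⟩ := key u v huv
    have h3 := hS.1 w
    have hsub : closedNbhd petersen w ∩ S ⊆
        ((((insert w (nbF w)).erase u).erase v : Finset PV) : Set PV) := by
      rw [cn_coe]
      rintro y ⟨hy, hyS⟩
      rw [Finset.mem_coe, Finset.mem_erase, Finset.mem_erase]
      exact ⟨fun h => hv (h ▸ hyS), fun h => hu (h ▸ hyS), hy⟩
    have h4 := h3.trans (Set.encard_le_encard hsub)
    rw [Set.encard_coe_eq_coe_finsetCard] at h4
    have h5 : 3 ≤ (((insert w (nbF w)).erase u).erase v).card := by exact_mod_cast h4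
    omega
end
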